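/- Let n ≥ 1, α > 0 and 1 < q ≤ 1 + α/n. Suppose the coefficients a_{ij} satisfy condition (8) with this α and some c > 0. If (u,v) is an entire weak solution of the inequality u_t − Lu − |u|^{q−1}u ≥ v_t − Lv − |v|^{q−1}v in S such that u ≥ v everywhere in S, then u = v in S. -/

import Mathlib

open MeasureTheory Real

noncomputable section

/-- Euclidean space ℝⁿ. -/
abbrev Xn (n : ℕ) : Type := EuclideanSpace ℝ (Fin n)

/-- Points of the half-space `S = (0,∞) × ℝⁿ`. -/
abbrev Pt (n : ℕ) : Type := ℝ × Xn n

/-- The half-space `S = (0,∞) × ℝⁿ`. -/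
def halfSpace (n : ℕ) : Set (Pt n) := {p | 0 < p.1}

/-- Partial derivative in the time variable. -/
noncomputable def pdT {n : ℕ} (w : Pt n → ℝ) (p : Pt n) : ℝ :=
  fderiv ℝ w p (1, 0)

/-- Partial derivative in the space variable `x_j`. -/
noncomputable def pdX {n : ℕ} (w : Pt n → ℝ) (j : Fin n) (p : Pt n) : ℝ :=
  fderiv ℝ w p (0, EuclideanSpace.single j 1)

/-- The odd power function `x ↦ |x|^{q-1} x`. -/
noncomputable def oddPow (q x : ℝ) : ℝ := |x| ^ (q - 1) * x

/-- `(u,v)` is an entire weak solution of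
`u_t − Lu − |u|^{q−1}u ≥ v_t − Lv − |v|^{q−1}v` in `S`. -/
def WeakSolPair {n : ℕ} (a : Fin n → Fin n → Pt n → ℝ) (q : ℝ)
    (u v : Pt n → ℝ) : Prop :=
  ∀ φ : Pt n → ℝ, ContDiff ℝ (⊤ : ℕ∞) φ → HasCompactSupport φ →
    tsupport φ ⊆ halfSpace n → (∀ p, 0 ≤ φ p) →
    ∫ p in halfSpace n,
        (pdT u p * φ p + ∑ i, ∑ j, a i j p * pdX φ i p * pdX u j p
          - oddPow q (u p) * φ p) ≥
    ∫ p in halfSpace n,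
        (pdT v p * φ p + ∑ i, ∑ j, a i j p * pdX φ i p * pdX v j p
          - oddPow q (v p) * φ p)

/-- Condition (8): `𝒜(R) ≤ c R^{2-α}` for all `R > 1`, expressed as an a.e. bound
on the majorant `A` over the region `{(t,x) : t > 0, R/2 < |x| < R}`. -/
def Cond8 {n : ℕ} (A : Pt n → ℝ) (α c : ℝ) : Prop :=
  ∀ R : ℝ, 1 < R →
    ∀ᵐ p ∂(volume.restrict
        {p : Pt n | 0 < p.1 ∧ R / 2 < ‖p.2‖ ∧ ‖p.2‖ < R}),
      A p ≤ c * R ^ (2 - α)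

/-!
The difference `w = u - v ≥ 0` satisfies `w_t - Lw ≥ k w ^ q` weakly, with `k = 2 ^ (1 - q)`, by a
convexity inequality for the odd power. Testing with `(1 + (1 + w / ε) ^ (-s)) ζ`, the quadratic
term produced by the weight absorbs the cross term in `∇w` and `∇ζ`, so no derivative of `w`
survives and `∫ w ^ q ζ` is bounded by `ε ∫ (1 + w / ε) ^ (1 + s)` against derivatives of `ζ`.

For `ζ` a high power of a cutoff to the cylinder `t ≤ R ^ α`, `|x| ≤ R`, condition (8) makes these
derivatives `O(R ^ (-α))`, supported in a shell of volume `O(R ^ (n + α))`. With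
`ε = κ R ^ (-α / (q - 1))` and Young's inequality this reads
`∫ w ^ q ζ ≤ δ κ ^ (1 - q) ∫_shell w ^ q ζ + M κ`, uniformly in `R` exactly because
`n ≤ α / (q - 1)`. Taking `κ = 1` and `δ = 1 / 2` gives `w ^ q` integrable away from `t = 0`; hence
the shell integral tends to zero as `R → ∞`, and then letting `κ → 0` gives `∫ w ^ q = 0`, also at
the critical exponent.
-/

open Set Filter Metric Topology

section OddPow

variable {q : ℝ}

lemma oddPow_neg (q x : ℝ) : oddPow q (-x) = -oddPow q x := by
  simp only [oddPow, abs_neg, mul_neg]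

lemma oddPow_of_nonneg (hq : q ≠ 0) {x : ℝ} (hx : 0 ≤ x) : oddPow q x = x ^ q := by
  rw [oddPow, abs_of_nonneg hx, ← rpow_add_one' hx (by simpa only [sub_add_cancel]),
    sub_add_cancel]

lemma continuous_oddPow (hq : 1 ≤ q) : Continuous (oddPow q) :=
  (continuous_abs.rpow_const fun _ => Or.inr (sub_nonneg.2 hq)).mul continuous_id

lemma mul_sub_rpow_le_rpow_sub_rpow (hq : 1 ≤ q) {x y : ℝ} (hy : 0 ≤ y) (hyx : y ≤ x) :
    (2 : ℝ) ^ (1 - q) * (x - y) ^ q ≤ x ^ q - y ^ q := by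
  have hd : 0 ≤ x - y := sub_nonneg.2 hyx
  have hsuper := add_rpow_le_rpow_add hd hy hq
  rw [sub_add_cancel] at hsuper
  have hle : (2 : ℝ) ^ (1 - q) * (x - y) ^ q ≤ (x - y) ^ q :=
    mul_le_of_le_one_left (rpow_nonneg hd q)
      (rpow_le_one_of_one_le_of_nonpos one_le_two (by linarith))
  linarith

lemma mul_add_rpow_le_rpow_add_rpow (hq : 1 ≤ q) {x y : ℝ} (hx : 0 ≤ x) (hy : 0 ≤ y) :
    (2 : ℝ) ^ (1 - q) * (x + y) ^ q ≤ x ^ q + y ^ q := by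
  have hconvex : (x + y) ^ q ≤ (2 : ℝ) ^ (q - 1) * (x ^ q + y ^ q) := by
    lift x to NNReal using hx
    lift y to NNReal using hy
    exact_mod_cast NNReal.rpow_add_le_mul_rpow_add_rpow x y hq
  rwa [← neg_sub, rpow_neg zero_le_two, inv_mul_le_iff₀ (rpow_pos_of_pos two_pos _)]

lemma mul_sub_rpow_le_oddPow_sub_oddPow (hq : 1 ≤ q) {x y : ℝ} (hyx : y ≤ x) :
    (2 : ℝ) ^ (1 - q) * (x - y) ^ q ≤ oddPow q x - oddPow q y := by
  have hq0 : q ≠ 0 := by linarith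
  rcases le_total 0 y with hy | hy
  · rw [oddPow_of_nonneg hq0 (hy.trans hyx), oddPow_of_nonneg hq0 hy]
    exact mul_sub_rpow_le_rpow_sub_rpow hq hy hyx
  have hodd : oddPow q y = -(-y) ^ q := by
    rw [← oddPow_of_nonneg hq0 (neg_nonneg.2 hy), oddPow_neg, neg_neg]
  rcases le_total 0 x with hx | hx
  · rw [hodd, oddPow_of_nonneg hq0 hx, sub_neg_eq_add, sub_eq_add_neg x y]
    exact mul_add_rpow_le_rpow_add_rpow hq hx (neg_nonneg.2 hy)
  · have hodd' : oddPow q x = -(-x) ^ q := by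
      rw [← oddPow_of_nonneg hq0 (neg_nonneg.2 hx), oddPow_neg, neg_neg]
    have h := mul_sub_rpow_le_rpow_sub_rpow hq (neg_nonneg.2 hx) (neg_le_neg hyx)
    rw [neg_sub_neg] at h
    linarith

end OddPow

section CompactSupport

variable {X G₁ G₂ G₃ : Type*} [TopologicalSpace X] [MeasurableSpace X] [OpensMeasurableSpace X]
  [NormedAddCommGroup G₁] [NormedSpace ℝ G₁] [NormedAddCommGroup G₂] [NormedSpace ℝ G₂]
  [NormedAddCommGroup G₃] [NormedSpace ℝ G₃]
  {μ : Measure X} {U : Set X} {ζ : X → G₁} {f : X → G₂}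

lemma integrable_bilin_of_hasCompactSupport (B : G₁ →L[ℝ] G₂ →L[ℝ] G₃) (hζ : Continuous ζ)
    (hζc : HasCompactSupport ζ) (hζU : tsupport ζ ⊆ U) (hf : LocallyIntegrableOn f U μ) :
    Integrable (fun p => B (ζ p) (f p)) μ := by
  obtain ⟨C, hC⟩ := hζc.exists_bound_of_continuous hζ
  have hK : IntegrableOn (fun p => B (ζ p) (f p)) (tsupport ζ) μ :=
    B.integrable_of_bilin_of_bdd_left C
      (hζ.stronglyMeasurable_of_hasCompactSupport hζc).aestronglyMeasurable
      (.of_forall hC) (hf.integrableOn_compact_subset hζU hζc)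
  refine hK.integrable_of_forall_notMem_eq_zero fun p hp => ?_
  simp only [image_eq_zero_of_notMem_tsupport hp, map_zero, zero_apply]

lemma integrable_mul_of_tsupport_subset [IsLocallyFiniteMeasure μ] {h η : X → ℝ}
    (hU : MeasurableSet U) (hh : ContinuousOn h U) (hη : Continuous η)
    (hηc : HasCompactSupport η) (hηU : tsupport η ⊆ U) : Integrable (fun p => h p * η p) μ := by
  simpa only [ContinuousLinearMap.mul_apply', mul_comm] using
    integrable_bilin_of_hasCompactSupport (.mul ℝ ℝ) hη hηc hηU (hh.locallyIntegrableOn hU)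

end CompactSupport

section TestFunctions

variable {E : Type*} [NormedAddCommGroup E] [NormedSpace ℝ E] {k : ℕ∞} {U : Set E} {φ ζ : E → ℝ}

/-- Nonnegative test functions of class `C^k` on `U`: they are defined on the whole space and
compactly supported in `U`. -/
structure IsTestFunction (k : ℕ∞) (U : Set E) (φ : E → ℝ) : Prop where
  contDiff : ContDiff ℝ k φ
  hasCompactSupport : HasCompactSupport φ
  tsupport_subset : tsupport φ ⊆ U
  nonneg : ∀ p, 0 ≤ φ p

lemma contDiff_mul_of_tsupport_subset {f : E → ℝ} (hU : IsOpen U) (hf : ContDiffOn ℝ k f U)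
    (hζ : ContDiff ℝ k ζ) (hζU : tsupport ζ ⊆ U) : ContDiff ℝ k (fun p => f p * ζ p) := by
  refine contDiff_iff_contDiffAt.2 fun p => ?_
  by_cases hp : p ∈ tsupport ζ
  · exact (hf.contDiffAt (hU.mem_nhds (hζU hp))).mul hζ.contDiffAt
  · refine contDiffAt_const (c := (0 : ℝ)) |>.congr_of_eventuallyEq ?_
    filter_upwards [notMem_tsupport_iff_eventuallyEq.1 hp] with x hx
    simp only [hx, Pi.zero_apply, mul_zero]

namespace IsTestFunction

lemma of_le {l : ℕ∞} (hφ : IsTestFunction k U φ) (hl : l ≤ k) : IsTestFunction l U φ :=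
  { hφ with contDiff := hφ.contDiff.of_le (by exact_mod_cast hl) }

lemma mul_left {f : E → ℝ} (hζ : IsTestFunction k U ζ) (hU : IsOpen U)
    (hf : ContDiffOn ℝ k f U) (hf0 : ∀ p ∈ U, 0 ≤ f p) :
    IsTestFunction k U (fun p => f p * ζ p) where
  contDiff := contDiff_mul_of_tsupport_subset hU hf hζ.contDiff hζ.tsupport_subset
  hasCompactSupport := hζ.hasCompactSupport.mul_left
  tsupport_subset := tsupport_mul_subset_right.trans hζ.tsupport_subset
  nonneg p := by
    by_cases hp : p ∈ tsupport ζ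
    · exact mul_nonneg (hf0 p (hζ.tsupport_subset hp)) (hζ.nonneg p)
    · rw [image_eq_zero_of_notMem_tsupport hp, mul_zero]

end IsTestFunction

open Convolution in
lemma fderiv_convolution_lsmul [MeasurableSpace E] [BorelSpace E]
    {μ : Measure E} [SFinite μ] [μ.IsAddLeftInvariant] {b : E → ℝ} (hb : LocallyIntegrable b μ)
    (hφ : ContDiff ℝ 1 φ) (hφc : HasCompactSupport φ) (p : E) :
    fderiv ℝ (b ⋆[ContinuousLinearMap.lsmul ℝ ℝ, μ] φ) p =
      (b ⋆[ContinuousLinearMap.lsmul ℝ ℝ, μ] fderiv ℝ φ) p :=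
  (hφc.hasFDerivAt_convolution_right (.lsmul ℝ ℝ) hb hφ p).fderiv

open Convolution in
lemma IsTestFunction.exists_smooth_approx [FiniteDimensional ℝ E] (hφ : IsTestFunction 1 U φ)
    {δ : ℝ} (hδ : 0 < δ) (hδU : cthickening δ (tsupport φ) ⊆ U) :
    ∃ ψ : E → ℝ, IsTestFunction ⊤ U ψ ∧ tsupport ψ ⊆ cthickening δ (tsupport φ) ∧
      (∀ p, ‖ψ p - φ p‖ ≤ δ) ∧ ∀ p, ‖fderiv ℝ ψ p - fderiv ℝ φ p‖ ≤ δ := by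
  borelize E
  have hφ'cont : Continuous (fderiv ℝ φ) := hφ.contDiff.continuous_fderiv one_ne_zero
  obtain ⟨r, hr, hφr⟩ := uniformContinuous_iff.1
    ((hφ.hasCompactSupport.uniformContinuous_of_continuous hφ.contDiff.continuous).prodMk
      ((hφ.hasCompactSupport.fderiv ℝ).uniformContinuous_of_continuous hφ'cont)) δ hδ
  let b : ContDiffBump (0 : E) :=
    ⟨min δ r / 2, min δ r, half_pos (lt_min hδ hr), half_lt_self (lt_min hδ hr)⟩
  let μ : Measure E := Measure.addHaar
  have hbs : ContDiff ℝ (⊤ : ℕ∞) (b.normed μ) := b.contDiff_normed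
  have hclose : ∀ p, ∀ x ∈ ball p b.rOut, dist (φ x, fderiv ℝ φ x) (φ p, fderiv ℝ φ p) ≤ δ :=
    fun p x hx => (hφr ((mem_ball.1 hx).trans_le (min_le_right _ _))).le
  have hsupp : tsupport (b.normed μ ⋆[ContinuousLinearMap.lsmul ℝ ℝ, μ] φ) ⊆
      cthickening δ (tsupport φ) := by
    refine closure_minimal (fun x hx => ?_) isClosed_cthickening
    obtain ⟨y, hy, z, hz, rfl⟩ := support_convolution_subset _ hx
    rw [b.support_normed_eq, mem_ball_zero_iff] at hy
    refine mem_cthickening_of_dist_le _ z _ _ (subset_tsupport _ hz) ?_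
    simpa only [dist_eq_norm, add_sub_cancel_right] using hy.le.trans (min_le_left _ _)
  refine ⟨b.normed μ ⋆[ContinuousLinearMap.lsmul ℝ ℝ, μ] φ, ⟨?_, ?_, hsupp.trans hδU, ?_⟩, hsupp,
    fun p => ?_, fun p => ?_⟩
  · exact b.hasCompactSupport_normed.contDiff_convolution_left _ hbs
      hφ.contDiff.continuous.locallyIntegrable
  · exact hφ.hasCompactSupport.isCompact.cthickening.of_isClosed_subset isClosed_closure hsupp
  · exact fun p => integral_nonneg fun t => mul_nonneg (b.nonneg_normed _) (hφ.nonneg _)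
  · exact dist_eq_norm (_ : ℝ) (φ p) ▸ b.dist_normed_convolution_le
      hφ.contDiff.continuous.aestronglyMeasurable
      fun x hx => (le_max_left _ _).trans (hclose p x hx)
  · rw [fderiv_convolution_lsmul hbs.continuous.locallyIntegrable hφ.contDiff
      hφ.hasCompactSupport, ← dist_eq_norm]
    exact b.dist_normed_convolution_le hφ'cont.aestronglyMeasurable
      fun x hx => (le_max_right _ _).trans (hclose p x hx)

end TestFunctions

section WeakPairing

variable {E : Type*} [NormedAddCommGroup E] [NormedSpace ℝ E] [MeasurableSpace E] {U : Set E}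
  {φ ζ : E → ℝ}

/-- The pairing `⟨g - div F, φ⟩ = ∫_U (g φ + F · ∇φ)` of a distribution of order one with a test
function. -/
def weakPairing (μ : Measure E) (U : Set E) (g : E → ℝ) (F : E → E) (φ : E → ℝ) : ℝ :=
  ∫ p in U, (φ p * g p + fderiv ℝ φ p (F p)) ∂μ

variable {μ : Measure E} {g : E → ℝ} {F : E → E}

lemma weakPairing_congr {g' : E → ℝ} {F' : E → E} (hU : MeasurableSet U)
    (hg : EqOn g g' U) (hF : EqOn F F' U) :
    weakPairing μ U g F φ = weakPairing μ U g' F' φ :=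
  setIntegral_congr_fun hU fun p hp => by simp only [hg hp, hF hp]

lemma weakPairing_le {K : Set E} (hK : IsCompact K) (hKU : K ⊆ U)
    (hU : MeasurableSet U) (hφ : tsupport φ ⊆ K) {δ : ℝ} (hφδ : ∀ p, ‖φ p‖ ≤ δ)
    (hφδ' : ∀ p, ‖fderiv ℝ φ p‖ ≤ δ)
    (hg : LocallyIntegrableOn g U μ) (hF : LocallyIntegrableOn F U μ) :
    weakPairing μ U g F φ ≤ δ * ∫ p in K, (‖g p‖ + ‖F p‖) ∂μ := by
  have hzero : ∀ p ∈ U \ K, φ p * g p + fderiv ℝ φ p (F p) = 0 := fun p hp => by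
    have hp' : p ∉ tsupport φ := fun h => hp.2 (hφ h)
    rw [image_eq_zero_of_notMem_tsupport hp', fderiv_of_notMem_tsupport ℝ hp', zero_mul,
      zero_add, zero_apply]
  rw [weakPairing, setIntegral_eq_of_subset_of_forall_sdiff_eq_zero hU hKU hzero,
    ← integral_const_mul]
  have hint : IntegrableOn (fun p => ‖g p‖ + ‖F p‖) K μ :=
    (hg.integrableOn_compact_subset hKU hK).norm.add (hF.integrableOn_compact_subset hKU hK).norm
  refine (le_norm_self _).trans (norm_integral_le_of_norm_le (hint.const_mul δ)
    (.of_forall fun p => ?_))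
  calc ‖φ p * g p + fderiv ℝ φ p (F p)‖
      ≤ ‖φ p‖ * ‖g p‖ + ‖fderiv ℝ φ p‖ * ‖F p‖ :=
        (norm_add_le _ _).trans (add_le_add (norm_mul_le _ _) ((fderiv ℝ φ p).le_opNorm _))
    _ ≤ δ * (‖g p‖ + ‖F p‖) := by
        rw [mul_add]
        gcongr
        exacts [hφδ p, hφδ' p]

variable [BorelSpace E]

lemma IsTestFunction.integrableOn_weakPairing (hφ : IsTestFunction 1 U φ)
    (hg : LocallyIntegrableOn g U μ) (hF : LocallyIntegrableOn F U μ) :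
    IntegrableOn (fun p => φ p * g p + fderiv ℝ φ p (F p)) U μ :=
  ((integrable_bilin_of_hasCompactSupport (.mul ℝ ℝ) hφ.contDiff.continuous
      hφ.hasCompactSupport hφ.tsupport_subset hg).add
    (integrable_bilin_of_hasCompactSupport (.id ℝ (E →L[ℝ] ℝ))
      (hφ.contDiff.continuous_fderiv one_ne_zero) (hφ.hasCompactSupport.fderiv ℝ)
      ((tsupport_fderiv_subset ℝ).trans hφ.tsupport_subset) hF)).integrableOn

lemma weakPairing_sub {ψ : E → ℝ} (hφ : IsTestFunction 1 U φ) (hψ : IsTestFunction 1 U ψ)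
    (hg : LocallyIntegrableOn g U μ) (hF : LocallyIntegrableOn F U μ) :
    weakPairing μ U g F (ψ - φ) = weakPairing μ U g F ψ - weakPairing μ U g F φ := by
  rw [weakPairing, weakPairing, weakPairing, ← integral_sub
    (hψ.integrableOn_weakPairing hg hF) (hφ.integrableOn_weakPairing hg hF)]
  refine integral_congr_ae (.of_forall fun p => ?_)
  have hderiv : fderiv ℝ (ψ - φ) p = fderiv ℝ ψ p - fderiv ℝ φ p :=
    fderiv_sub (hψ.contDiff.differentiable one_ne_zero p)
      (hφ.contDiff.differentiable one_ne_zero p)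
  simp only [hderiv, Pi.sub_apply, sub_apply]
  ring

lemma weakPairing_sub_left {g₁ g₂ : E → ℝ} {F₁ F₂ : E → E} (hφ : IsTestFunction 1 U φ)
    (hg₁ : LocallyIntegrableOn g₁ U μ) (hF₁ : LocallyIntegrableOn F₁ U μ)
    (hg₂ : LocallyIntegrableOn g₂ U μ) (hF₂ : LocallyIntegrableOn F₂ U μ) :
    weakPairing μ U (g₁ - g₂) (F₁ - F₂) φ =
      weakPairing μ U g₁ F₁ φ - weakPairing μ U g₂ F₂ φ := by
  rw [weakPairing, weakPairing, weakPairing, ← integral_sub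
    (hφ.integrableOn_weakPairing hg₁ hF₁) (hφ.integrableOn_weakPairing hg₂ hF₂)]
  refine integral_congr_ae (.of_forall fun p => ?_)
  simp only [Pi.sub_apply, map_sub]
  ring

variable [FiniteDimensional ℝ E]

lemma weakPairing_nonneg_of_smooth (hU : IsOpen U) (hg : LocallyIntegrableOn g U μ)
    (hF : LocallyIntegrableOn F U μ)
    (hsmooth : ∀ ψ, IsTestFunction ⊤ U ψ → 0 ≤ weakPairing μ U g F ψ)
    (hφ : IsTestFunction 1 U φ) : 0 ≤ weakPairing μ U g F φ := by
  obtain ⟨r, hr, hrU⟩ := hφ.hasCompactSupport.isCompact.exists_cthickening_subset_open hU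
    hφ.tsupport_subset
  set M := ∫ p in cthickening r (tsupport φ), (‖g p‖ + ‖F p‖) ∂μ
  have hbound : ∀ δ ∈ Ioc 0 r, 0 ≤ weakPairing μ U g F φ + δ * M := fun δ hδ => by
    have hδr : cthickening δ (tsupport φ) ⊆ cthickening r (tsupport φ) :=
      cthickening_mono hδ.2 _
    obtain ⟨ψ, hψ, hψsupp, hψφ, hψφ'⟩ := hφ.exists_smooth_approx hδ.1 (hδr.trans hrU)
    have hψ1 : IsTestFunction 1 U ψ := hψ.of_le le_top
    have hsupp : tsupport (ψ - φ) ⊆ cthickening r (tsupport φ) :=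
      (tsupport_sub ψ φ).trans
        (union_subset (hψsupp.trans hδr) (self_subset_cthickening _))
    have hle := weakPairing_le hφ.hasCompactSupport.isCompact.cthickening hrU hU.measurableSet
      hsupp hψφ (fun p => by
        rw [fderiv_sub (hψ1.contDiff.differentiable one_ne_zero p)
          (hφ.contDiff.differentiable one_ne_zero p)]
        exact hψφ' p) hg hF
    rw [weakPairing_sub hφ hψ1 hg hF] at hle
    linarith [hsmooth ψ hψ]
  have hlim : Tendsto (fun δ => weakPairing μ U g F φ + δ * M) (𝓝[>] 0)
      (𝓝 (weakPairing μ U g F φ)) := by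
    refine tendsto_nhdsWithin_of_tendsto_nhds (Continuous.tendsto' (by fun_prop) _ _ ?_)
    rw [zero_mul, add_zero]
  exact ge_of_tendsto hlim (eventually_of_mem (Ioc_mem_nhdsGT hr) hbound)

lemma setIntegral_fderiv_apply_mul [μ.IsAddHaarMeasure] {f : E → ℝ} (hU : IsOpen U)
    (hf : ContDiffOn ℝ 1 f U)
    (hζ : IsTestFunction 1 U ζ) (v : E) :
    ∫ p in U, fderiv ℝ f p v * ζ p ∂μ = -∫ p in U, f p * fderiv ℝ ζ p v ∂μ := by
  have hderivU : tsupport (fun p => fderiv ℝ ζ p v) ⊆ U :=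
    (tsupport_fderiv_apply_subset ℝ v).trans hζ.tsupport_subset
  have hfζ : ∀ p ∉ U, f p * fderiv ℝ ζ p v = 0 := fun p hp => by
    rw [image_eq_zero_of_notMem_tsupport (fun h => hp (hderivU h)), mul_zero]
  have hζf : ∀ p ∉ U, fderiv ℝ f p v * ζ p = 0 := fun p hp => by
    rw [image_eq_zero_of_notMem_tsupport (fun h => hp (hζ.tsupport_subset h)), mul_zero]
  have hζcont : Continuous ζ := hζ.contDiff.continuous
  have hf' : ContinuousOn (fun p => fderiv ℝ f p v) U :=
    (hf.continuousOn_fderiv_of_isOpen hU le_rfl).clm_apply continuousOn_const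
  have hζ' : Continuous (fun p => fderiv ℝ ζ p v) :=
    (hζ.contDiff.continuous_fderiv one_ne_zero).clm_apply continuous_const
  rw [setIntegral_eq_integral_of_forall_compl_eq_zero hζf,
    setIntegral_eq_integral_of_forall_compl_eq_zero hfζ,
    integral_mul_fderiv_eq_neg_fderiv_mul_of_integrable, neg_neg]
  · exact integrable_mul_of_tsupport_subset hU.measurableSet hf' hζcont
      hζ.hasCompactSupport hζ.tsupport_subset
  · exact integrable_mul_of_tsupport_subset hU.measurableSet hf.continuousOn hζ'
      (hζ.hasCompactSupport.fderiv_apply ℝ v) hderivU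
  · exact integrable_mul_of_tsupport_subset hU.measurableSet hf.continuousOn hζcont
      hζ.hasCompactSupport hζ.tsupport_subset
  · exact fun p hp => (hf.contDiffAt (hU.mem_nhds (hζ.tsupport_subset hp))).differentiableAt
      one_ne_zero
  · exact fun p _ => hζ.contDiff.differentiable one_ne_zero p

end WeakPairing

section Coefficients

variable {n : ℕ} {a : Fin n → Fin n → Pt n → ℝ} {w φ : Pt n → ℝ} {p : Pt n} {U : Set (Pt n)}

instance isAddHaarMeasure_volume_pt (n : ℕ) : (volume : Measure (Pt n)).IsAddHaarMeasure := by
  rw [Measure.volume_eq_prod]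
  infer_instance

lemma isOpen_halfSpace (n : ℕ) : IsOpen (halfSpace n) :=
  isOpen_lt continuous_const continuous_fst

/-- The spatial gradient `∇w = (∂w/∂x_1, …, ∂w/∂x_n)`. -/
def gradX (w : Pt n → ℝ) (p : Pt n) : Fin n → ℝ := fun j => pdX w j p

/-- The bilinear form `(ξ, η) ↦ ∑ a_{ij}(p) ξ_i η_j`. -/
def coeffForm (a : Fin n → Fin n → Pt n → ℝ) (p : Pt n) : LinearMap.BilinForm ℝ (Fin n → ℝ) :=
  Matrix.toBilin' (.of fun i j => a i j p)

/-- The field `(0, a ∇w)` on space-time, whose divergence is `Lw`. -/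
def flux (a : Fin n → Fin n → Pt n → ℝ) (w : Pt n → ℝ) (p : Pt n) : Pt n :=
  (0, WithLp.toLp 2 fun i => ∑ j, a i j p * pdX w j p)

lemma coeffForm_apply (ξ η : Fin n → ℝ) :
    coeffForm a p ξ η = ∑ i, ∑ j, a i j p * ξ i * η j := by
  simp only [coeffForm, Matrix.toBilin'_apply, Matrix.of_apply, mul_comm (ξ _)]

lemma prodMk_zero_eq_sum_smul_single (ξ : Xn n) :
    ((0 : ℝ), ξ) = ∑ i, ξ i • ((0 : ℝ), (EuclideanSpace.single i (1 : ℝ) : Xn n)) := by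
  have hξ := (EuclideanSpace.basisFun (Fin n) ℝ).sum_repr ξ
  simp only [EuclideanSpace.basisFun_repr, EuclideanSpace.basisFun_apply] at hξ
  refine Prod.ext ?_ ?_
  · simp only [Prod.smul_mk, smul_zero, Prod.fst_sum, Finset.sum_const_zero]
  · simp only [Prod.snd_sum, Prod.smul_mk, hξ]

lemma fderiv_apply_space (ξ : Xn n) : fderiv ℝ φ p (0, ξ) = ∑ i, ξ i * pdX φ i p := by
  rw [prodMk_zero_eq_sum_smul_single, map_sum]
  simp only [map_smul, smul_eq_mul, pdX]

lemma fderiv_apply_flux (a : Fin n → Fin n → Pt n → ℝ) (w φ : Pt n → ℝ) (p : Pt n) :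
    fderiv ℝ φ p (flux a w p) = coeffForm a p (gradX φ p) (gradX w p) := by
  rw [flux, fderiv_apply_space, coeffForm_apply]
  simp only [gradX, Finset.sum_mul]
  exact Finset.sum_congr rfl fun i _ => Finset.sum_congr rfl fun j _ => by ring

lemma pdT_mul {f g : Pt n → ℝ} (hf : DifferentiableAt ℝ f p) (hg : DifferentiableAt ℝ g p) :
    pdT (fun p => f p * g p) p = f p * pdT g p + g p * pdT f p := by
  simp only [pdT, fderiv_fun_mul hf hg, add_apply, smul_apply, smul_eq_mul]

lemma gradX_mul {f g : Pt n → ℝ} (hf : DifferentiableAt ℝ f p) (hg : DifferentiableAt ℝ g p) :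
    gradX (fun p => f p * g p) p = f p • gradX g p + g p • gradX f p := by
  ext j
  simp only [gradX, pdX, fderiv_fun_mul hf hg, add_apply, smul_apply, Pi.add_apply, Pi.smul_apply]

lemma pdT_comp {h : ℝ → ℝ} (hh : DifferentiableAt ℝ h (w p)) (hw : DifferentiableAt ℝ w p) :
    pdT (fun p => h (w p)) p = deriv h (w p) * pdT w p := by
  have hderiv : fderiv ℝ (fun p => h (w p)) p = _ :=
    (hh.hasDerivAt.comp_hasFDerivAt p hw.hasFDerivAt).fderiv
  simp only [pdT, hderiv, smul_apply, smul_eq_mul]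

lemma gradX_comp {h : ℝ → ℝ} (hh : DifferentiableAt ℝ h (w p)) (hw : DifferentiableAt ℝ w p) :
    gradX (fun p => h (w p)) p = deriv h (w p) • gradX w p := by
  have hderiv : fderiv ℝ (fun p => h (w p)) p = _ :=
    (hh.hasDerivAt.comp_hasFDerivAt p hw.hasFDerivAt).fderiv
  ext j
  simp only [gradX, pdX, hderiv, smul_apply, Pi.smul_apply]

lemma isPosSemidef_coeffForm (hsymm : ∀ i j, a i j p = a j i p)
    (hnonneg : ∀ ξ : Xn n, 0 ≤ ∑ i, ∑ j, a i j p * ξ i * ξ j) : (coeffForm a p).IsPosSemidef where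
  eq ξ η := by
    simp only [coeffForm_apply]
    rw [Finset.sum_comm]
    exact Finset.sum_congr rfl fun i _ => Finset.sum_congr rfl fun j _ => by rw [hsymm]; ring
  nonneg ξ := (coeffForm_apply ξ ξ).symm ▸ hnonneg (WithLp.toLp 2 ξ)

lemma continuousOn_pdT (hU : IsOpen U) (hw : ContDiffOn ℝ 1 w U) : ContinuousOn (pdT w) U :=
  (hw.continuousOn_fderiv_of_isOpen hU le_rfl).clm_apply continuousOn_const

lemma continuousOn_pdX (hU : IsOpen U) (hw : ContDiffOn ℝ 1 w U) (j : Fin n) :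
    ContinuousOn (pdX w j) U :=
  (hw.continuousOn_fderiv_of_isOpen hU le_rfl).clm_apply continuousOn_const

lemma locallyIntegrableOn_flux (hU : IsOpen U) (ha : ∀ i j, Measurable (a i j))
    (habdd : ∀ i j, ∀ K : Set (Pt n), IsCompact K → K ⊆ U → ∃ M, ∀ p ∈ K, |a i j p| ≤ M)
    (hw : ContDiffOn ℝ 1 w U) : LocallyIntegrableOn (flux a w) U := by
  refine (locallyIntegrableOn_iff hU.isLocallyClosed).2 fun K hKU hK => ?_
  have hcoeff : ∀ i j, IntegrableOn (fun p => a i j p * pdX w j p) K := fun i j => by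
    obtain ⟨M, hM⟩ := habdd i j K hK hKU
    have haK : IntegrableOn (a i j) K :=
      .of_bound hK.measure_lt_top (ha i j).aestronglyMeasurable M
        (ae_restrict_of_forall_mem hK.measurableSet hM)
    exact haK.mul_continuousOn ((continuousOn_pdX hU hw j).mono hKU) hK
  have hsum : flux a w = fun p => ∑ i, (∑ j, a i j p * pdX w j p) •
      ((0 : ℝ), (EuclideanSpace.single i (1 : ℝ) : Xn n)) :=
    funext fun p => prodMk_zero_eq_sum_smul_single _
  rw [hsum]
  exact integrable_finsetSum _ fun i _ =>
    (integrable_finsetSum _ fun j _ => hcoeff i j).smul_const _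

lemma flux_sub {v : Pt n → ℝ} (hw : DifferentiableAt ℝ w p) (hv : DifferentiableAt ℝ v p) :
    flux a (w - v) p = flux a w p - flux a v p := by
  have hcoord : ∀ i, ∑ j, a i j p * pdX (w - v) j p =
      ∑ j, a i j p * pdX w j p - ∑ j, a i j p * pdX v j p := fun i => by
    simp only [pdX, fderiv_sub hw hv, sub_apply, mul_sub, Finset.sum_sub_distrib]
  simp only [flux, hcoord, Prod.mk_sub_mk, sub_zero]
  rfl

/-- `w` is a `C¹` weak solution of `w_t - Lw ≥ g` in `U`, tested against `C¹` functions. -/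
structure IsWeakSupersolution (U : Set (Pt n)) (a : Fin n → Fin n → Pt n → ℝ)
    (w g : Pt n → ℝ) : Prop where
  contDiffOn : ContDiffOn ℝ 1 w U
  locallyIntegrableOn_source : LocallyIntegrableOn g U
  locallyIntegrableOn_flux : LocallyIntegrableOn (flux a w) U
  weakPairing_nonneg :
    ∀ φ, IsTestFunction 1 U φ → 0 ≤ weakPairing volume U (pdT w - g) (flux a w) φ

lemma setIntegral_eq_weakPairing (a : Fin n → Fin n → Pt n → ℝ) (q : ℝ)
    (w φ : Pt n → ℝ) :
    ∫ p in halfSpace n, (pdT w p * φ p + ∑ i, ∑ j, a i j p * pdX φ i p * pdX w j p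
      - oddPow q (w p) * φ p) =
    weakPairing volume (halfSpace n) (pdT w - oddPow q ∘ w) (flux a w) φ := by
  refine integral_congr_ae (.of_forall fun p => ?_)
  simp only [fderiv_apply_flux, coeffForm_apply, gradX, Pi.sub_apply, Function.comp_apply]
  ring

lemma WeakSolPair.isWeakSupersolution_sub {u v : Pt n → ℝ} {q : ℝ} (hq : 1 ≤ q)
    (ha : ∀ i j, Measurable (a i j))
    (habdd : ∀ i j, ∀ K : Set (Pt n), IsCompact K → K ⊆ halfSpace n → ∃ M, ∀ p ∈ K, |a i j p| ≤ M)
    (hu : ContDiffOn ℝ 1 u (halfSpace n)) (hv : ContDiffOn ℝ 1 v (halfSpace n))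
    (hsol : WeakSolPair a q u v) :
    IsWeakSupersolution (halfSpace n) a (u - v) (oddPow q ∘ u - oddPow q ∘ v) := by
  have hS := isOpen_halfSpace n
  have hpdT : ∀ {w : Pt n → ℝ}, ContDiffOn ℝ 1 w (halfSpace n) →
      LocallyIntegrableOn (pdT w) (halfSpace n) := fun hw =>
    (continuousOn_pdT hS hw).locallyIntegrableOn hS.measurableSet
  have hpow : ∀ {w : Pt n → ℝ}, ContDiffOn ℝ 1 w (halfSpace n) →
      LocallyIntegrableOn (oddPow q ∘ w) (halfSpace n) := fun hw =>
    ((continuous_oddPow hq).comp_continuousOn hw.continuousOn).locallyIntegrableOn hS.measurableSet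
  have hF : ∀ {w : Pt n → ℝ}, ContDiffOn ℝ 1 w (halfSpace n) →
      LocallyIntegrableOn (flux a w) (halfSpace n) := locallyIntegrableOn_flux hS ha habdd
  have hdiff : ∀ {w : Pt n → ℝ}, ContDiffOn ℝ 1 w (halfSpace n) → ∀ p ∈ halfSpace n,
      DifferentiableAt ℝ w p := fun hw p hp =>
    (hw.contDiffAt (hS.mem_nhds hp)).differentiableAt one_ne_zero
  have hg : LocallyIntegrableOn (oddPow q ∘ u - oddPow q ∘ v) (halfSpace n) :=
    (hpow hu).sub (hpow hv)
  refine ⟨hu.sub hv, hg, hF (hu.sub hv), fun φ hφ => weakPairing_nonneg_of_smooth hS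
    ((hpdT (hu.sub hv)).sub hg) (hF (hu.sub hv)) (fun ψ hψ => ?_) hφ⟩
  have hψ1 : IsTestFunction 1 (halfSpace n) ψ := hψ.of_le le_top
  have hweak := hsol ψ hψ.contDiff hψ.hasCompactSupport hψ.tsupport_subset hψ.nonneg
  rw [setIntegral_eq_weakPairing, setIntegral_eq_weakPairing, ge_iff_le, ← sub_nonneg,
    ← weakPairing_sub_left hψ1 ((hpdT hu).sub (hpow hu)) (hF hu) ((hpdT hv).sub (hpow hv))
      (hF hv)] at hweak
  refine hweak.trans_eq (weakPairing_congr hS.measurableSet (fun p hp => ?_) fun p hp => ?_)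
  · simp only [Pi.sub_apply, pdT, fderiv_sub (hdiff hu p hp) (hdiff hv p hp), sub_apply]
    ring
  · exact (flux_sub (hdiff hu p hp) (hdiff hv p hp)).symm

end Coefficients

section Energy

variable {n : ℕ} {a : Fin n → Fin n → Pt n → ℝ} {w g ζ H : Pt n → ℝ} {U : Set (Pt n)}

lemma mul_le_add_of_sq_le {f x y b m H : ℝ} (hx : 0 ≤ x) (hm : 0 ≤ m) (hH : 0 ≤ H)
    (hy : y ^ 2 ≤ x * b) (hb : f ^ 2 * b ≤ 4 * m * H) : f * y ≤ m * x + H := by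
  refine le_of_abs_le (abs_le_of_sq_le_sq ?_ (by positivity))
  calc (f * y) ^ 2 = f ^ 2 * y ^ 2 := mul_pow f y 2
    _ ≤ f ^ 2 * (x * b) := by gcongr
    _ = x * (f ^ 2 * b) := by ring
    _ ≤ x * (4 * m * H) := by gcongr
    _ ≤ (m * x + H) ^ 2 := by linarith [sq_nonneg (m * x - H)]

lemma coeffForm_gradX_comp_mul_le {h : ℝ → ℝ} {p : Pt n} {H : ℝ}
    (ha : (coeffForm a p).IsPosSemidef) (hh : DifferentiableAt ℝ h (w p))
    (hw : DifferentiableAt ℝ w p) (hζ : DifferentiableAt ℝ ζ p) (hh' : deriv h (w p) ≤ 0)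
    (hζ0 : 0 ≤ ζ p) (hH : 0 ≤ H)
    (hHζ : h (w p) ^ 2 * coeffForm a p (gradX ζ p) (gradX ζ p) ≤
      4 * (-deriv h (w p) * ζ p) * H) :
    coeffForm a p (gradX (fun p => h (w p) * ζ p) p) (gradX w p) ≤ H := by
  have hcs : coeffForm a p (gradX ζ p) (gradX w p) ^ 2 ≤
      coeffForm a p (gradX w p) (gradX w p) * coeffForm a p (gradX ζ p) (gradX ζ p) := by
    rw [mul_comm]
    exact LinearMap.BilinForm.apply_sq_le_of_symm _ ha.nonneg
      ⟨ha.isSymm.eq⟩ _ _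
  have hyoung := mul_le_add_of_sq_le (ha.nonneg (gradX w p))
    (mul_nonneg (neg_nonneg.2 hh') hζ0) hH hcs hHζ
  rw [gradX_mul (hh.fun_comp' p hw) hζ, gradX_comp hh hw]
  simp only [map_add, map_smul, LinearMap.add_apply, LinearMap.smul_apply, smul_eq_mul]
  linarith

lemma setIntegral_deriv_comp_mul_pdT (hU : IsOpen U) (hw : ContDiffOn ℝ 1 w U)
    {V : Set ℝ} (hV : IsOpen V) (hwV : MapsTo w U V) {F : ℝ → ℝ} (hF : ContDiffOn ℝ 1 F V)
    (hζ : IsTestFunction 1 U ζ) :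
    ∫ p in U, deriv F (w p) * ζ p * pdT w p = -∫ p in U, F (w p) * pdT ζ p := by
  have hparts := setIntegral_fderiv_apply_mul (μ := volume) hU (hF.comp hw hwV) hζ (1, 0)
  refine (setIntegral_congr_fun hU.measurableSet fun p hp => ?_).trans hparts
  have hFp := (hF.contDiffAt (hV.mem_nhds (hwV hp))).differentiableAt one_ne_zero
  have hwp := (hw.contDiffAt (hU.mem_nhds hp)).differentiableAt one_ne_zero
  change _ = pdT (fun p => F (w p)) p * ζ p
  rw [pdT_comp hFp hwp]
  ring

namespace IsWeakSupersolution

/-- Testing with `h(w) ζ` for a decreasing `h`: the term `h'(w) ζ a ∇w · ∇w ≤ 0` absorbs the cross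
term `h(w) a ∇ζ · ∇w`. -/
lemma setIntegral_mul_le_of_comp_mul (hU : IsOpen U) (hsuper : IsWeakSupersolution U a w g)
    (ha : ∀ᵐ p ∂volume.restrict U, (coeffForm a p).IsPosSemidef) (hg0 : ∀ p ∈ U, 0 ≤ g p)
    {h : ℝ → ℝ} {V : Set ℝ} (hV : IsOpen V) (hwV : MapsTo w U V) (hh : ContDiffOn ℝ 1 h V)
    (hh1 : ∀ p ∈ U, 1 ≤ h (w p)) (hh' : ∀ p ∈ U, deriv h (w p) ≤ 0)
    (hζ : IsTestFunction 1 U ζ) (hH : IntegrableOn H U) (hH0 : ∀ p ∈ U, 0 ≤ H p)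
    (hHζ : ∀ᵐ p ∂volume.restrict U, h (w p) ^ 2 * coeffForm a p (gradX ζ p) (gradX ζ p) ≤
      4 * (-deriv h (w p) * ζ p) * H p) :
    ∫ p in U, ζ p * g p ≤ (∫ p in U, h (w p) * ζ p * pdT w p) + ∫ p in U, H p := by
  have hφ : IsTestFunction 1 U (fun p => h (w p) * ζ p) :=
    hζ.mul_left hU (hh.comp hsuper.contDiffOn hwV) fun p hp => zero_le_one.trans (hh1 p hp)
  have hint : ∀ {φ f : Pt n → ℝ}, IsTestFunction 1 U φ → LocallyIntegrableOn f U →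
      IntegrableOn (fun p => φ p * f p) U := fun hφ hf =>
    (integrable_bilin_of_hasCompactSupport (.mul ℝ ℝ) hφ.contDiff.continuous
      hφ.hasCompactSupport hφ.tsupport_subset hf).integrableOn (s := U)
  have hpdT : LocallyIntegrableOn (pdT w) U :=
    (continuousOn_pdT hU hsuper.contDiffOn).locallyIntegrableOn hU.measurableSet
  have hg := hsuper.locallyIntegrableOn_source
  have hsum : IntegrableOn (fun p => h (w p) * ζ p * pdT w p + H p) U := (hint hφ hpdT).add hH
  have hle : weakPairing volume U (pdT w - g) (flux a w) (fun p => h (w p) * ζ p) ≤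
      ∫ p in U, (h (w p) * ζ p * pdT w p + H p - ζ p * g p) := by
    refine integral_mono_ae (hφ.integrableOn_weakPairing (hpdT.sub hg)
      hsuper.locallyIntegrableOn_flux) (hsum.sub (hint hζ hg)) ?_
    filter_upwards [ha, hHζ, ae_restrict_mem hU.measurableSet] with p hap hHp hpU
    have hform := coeffForm_gradX_comp_mul_le hap
      ((hh.contDiffAt (hV.mem_nhds (hwV hpU))).differentiableAt one_ne_zero)
      ((hsuper.contDiffOn.contDiffAt (hU.mem_nhds hpU)).differentiableAt one_ne_zero)
      (hζ.contDiff.differentiable one_ne_zero p) (hh' p hpU) (hζ.nonneg p) (hH0 p hpU) hHp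
    have hsource : ζ p * g p ≤ h (w p) * (ζ p * g p) :=
      le_mul_of_one_le_left (mul_nonneg (hζ.nonneg p) (hg0 p hpU)) (hh1 p hpU)
    simp only [fderiv_apply_flux, Pi.sub_apply]
    linarith
  rw [integral_sub hsum (hint hζ hg), integral_add (hint hφ hpdT) hH] at hle
  linarith [hsuper.weakPairing_nonneg _ hφ]

end IsWeakSupersolution

end Energy

section Caccioppoli

variable {n : ℕ} {a : Fin n → Fin n → Pt n → ℝ} {w g ζ Q : Pt n → ℝ} {U : Set (Pt n)} {s ε y : ℝ}

/-- The concave function `F(y) = y + ε (1 + y/ε)^{1-s} / (1-s)`, whose derivative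
`1 + (1 + y/ε)^{-s}` is the weight in the energy estimate. -/
def energyProfile (s ε y : ℝ) : ℝ := y + ε / (1 - s) * (1 + y / ε) ^ (1 - s)

lemma one_add_div_pos (hε : 0 < ε) (hy : y ∈ Ioi (-ε)) : 0 < 1 + y / ε := by
  rw [← div_self hε.ne', ← add_div]
  exact div_pos (neg_lt_iff_pos_add'.1 hy) hε

lemma contDiffOn_one_add_div_rpow (hε : 0 < ε) (r : ℝ) :
    ContDiffOn ℝ 1 (fun y => (1 + y / ε) ^ r) (Ioi (-ε)) :=
  (contDiffOn_const.add (contDiffOn_id.div_const ε)).rpow_const_of_ne fun _ hy =>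
    (one_add_div_pos hε hy).ne'

lemma hasDerivAt_one_add_div_rpow (hε : 0 < ε) (r : ℝ) (hy : y ∈ Ioi (-ε)) :
    HasDerivAt (fun y => (1 + y / ε) ^ r) (r / ε * (1 + y / ε) ^ (r - 1)) y := by
  convert (((hasDerivAt_id' y).div_const ε).const_add 1).rpow_const (p := r)
    (.inl (one_add_div_pos hε hy).ne') using 1
  ring

lemma contDiffOn_energyProfile (hε : 0 < ε) (s : ℝ) :
    ContDiffOn ℝ 1 (energyProfile s ε) (Ioi (-ε)) :=
  contDiffOn_id.add (contDiffOn_const.mul (contDiffOn_one_add_div_rpow hε _))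

lemma deriv_energyProfile (hs : s ≠ 1) (hε : 0 < ε) (hy : y ∈ Ioi (-ε)) :
    deriv (energyProfile s ε) y = 1 + (1 + y / ε) ^ (-s) := by
  have hs' : 1 - s ≠ 0 := sub_ne_zero.2 hs.symm
  have hderiv : HasDerivAt (energyProfile s ε) _ y := (hasDerivAt_id y).add
    ((hasDerivAt_one_add_div_rpow hε (1 - s) hy).const_mul (ε / (1 - s)))
  rw [hderiv.deriv, sub_sub_cancel_left]
  field_simp

lemma energyProfile_mem_Icc (hs : s ∈ Ioc 0 (1 / 2)) (hε : 0 < ε) (hy : 0 ≤ y) :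
    energyProfile s ε y ∈ Icc 0 (3 * ε * (1 + y / ε) ^ (1 + s)) := by
  obtain ⟨hs0, hs1⟩ := hs
  have hz : 1 ≤ 1 + y / ε := le_add_of_nonneg_right (by positivity)
  have hyz : y ≤ ε * (1 + y / ε) ^ (1 + s) := by
    have h1 : 1 + y / ε ≤ (1 + y / ε) ^ (1 + s) := self_le_rpow_of_one_le hz (by linarith)
    calc y = ε * (y / ε) := by field_simp
      _ ≤ ε * (1 + y / ε) ^ (1 + s) := by gcongr; linarith
  have hε2 : ε / (1 - s) ≤ 2 * ε := by
    rw [div_le_iff₀ (by linarith)]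
    nlinarith
  have hpow : (1 + y / ε) ^ (1 - s) ≤ (1 + y / ε) ^ (1 + s) :=
    rpow_le_rpow_of_exponent_le hz (by linarith)
  have hs2 : 0 < 1 - s := by linarith
  refine ⟨add_nonneg hy (by positivity), ?_⟩
  calc energyProfile s ε y ≤
      ε * (1 + y / ε) ^ (1 + s) + 2 * ε * (1 + y / ε) ^ (1 + s) := by
        unfold energyProfile
        gcongr
    _ = 3 * ε * (1 + y / ε) ^ (1 + s) := by ring

lemma neg_setIntegral_energyProfile_mul_pdT_le (hU : IsOpen U) (hw : ContDiffOn ℝ 1 w U)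
    (hw0 : ∀ p ∈ U, 0 ≤ w p) (hs : s ∈ Ioc 0 (1 / 2)) (hε : 0 < ε) (hζ : IsTestFunction 1 U ζ)
    (hQ0 : ∀ p ∈ U, 0 ≤ Q p) (hQ : IntegrableOn (fun p => (1 + w p / ε) ^ (1 + s) * Q p) U)
    (hQt : ∀ p ∈ U, -pdT ζ p ≤ Q p) :
    -∫ p in U, energyProfile s ε (w p) * pdT ζ p ≤
      3 * ε * ∫ p in U, (1 + w p / ε) ^ (1 + s) * Q p := by
  have hwV : MapsTo w U (Ioi (-ε)) := fun p hp => (neg_lt_zero.2 hε).trans_le (hw0 p hp)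
  have hint : IntegrableOn (fun p => energyProfile s ε (w p) * pdT ζ p) U :=
    (integrable_mul_of_tsupport_subset hU.measurableSet
      ((contDiffOn_energyProfile hε s).continuousOn.comp hw.continuousOn hwV)
      ((hζ.contDiff.continuous_fderiv one_ne_zero).clm_apply continuous_const)
      (hζ.hasCompactSupport.fderiv_apply ℝ _)
      ((tsupport_fderiv_apply_subset ℝ _).trans hζ.tsupport_subset)).integrableOn
  rw [← integral_neg, ← integral_const_mul]
  refine setIntegral_mono_on hint.neg (hQ.const_mul _) hU.measurableSet fun p hp => ?_
  obtain ⟨hF0, hF⟩ := energyProfile_mem_Icc hs hε (hw0 p hp)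
  calc -(energyProfile s ε (w p) * pdT ζ p) = energyProfile s ε (w p) * -pdT ζ p := by ring
    _ ≤ energyProfile s ε (w p) * Q p := mul_le_mul_of_nonneg_left (hQt p hp) hF0
    _ ≤ 3 * ε * (1 + w p / ε) ^ (1 + s) * Q p := mul_le_mul_of_nonneg_right hF (hQ0 p hp)
    _ = 3 * ε * ((1 + w p / ε) ^ (1 + s) * Q p) := by ring

lemma one_add_rpow_neg_sq_mul_le {b x Q : ℝ} (hs : 0 < s) (hε : 0 < ε) (hy : 0 ≤ y)
    (hx : 0 ≤ x) (hQ : 0 ≤ Q) (hb : b ≤ x * Q) :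
    (1 + (1 + y / ε) ^ (-s)) ^ 2 * b ≤
      4 * (-(-s / ε * (1 + y / ε) ^ (-s - 1)) * x) * (ε / s * ((1 + y / ε) ^ (1 + s) * Q)) := by
  have hz : 1 ≤ 1 + y / ε := le_add_of_nonneg_right (by positivity)
  have hz0 : 0 < 1 + y / ε := by positivity
  have hcancel : (1 + y / ε) ^ (-s - 1) * (1 + y / ε) ^ (1 + s) = 1 := by
    rw [← rpow_add hz0, show -s - 1 + (1 + s) = 0 by ring, rpow_zero]
  have hle : (1 + y / ε) ^ (-s) ≤ 1 := rpow_le_one_of_one_le_of_nonpos hz (by linarith)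
  calc (1 + (1 + y / ε) ^ (-s)) ^ 2 * b ≤ (1 + (1 + y / ε) ^ (-s)) ^ 2 * (x * Q) := by gcongr
    _ ≤ (1 + 1) ^ 2 * (x * Q) := by gcongr
    _ = 4 * (x * Q) * ((1 + y / ε) ^ (-s - 1) * (1 + y / ε) ^ (1 + s)) := by rw [hcancel]; ring
    _ = _ := by field_simp

lemma IsWeakSupersolution.setIntegral_mul_le (hU : IsOpen U)
    (hsuper : IsWeakSupersolution U a w g)
    (ha : ∀ᵐ p ∂volume.restrict U, (coeffForm a p).IsPosSemidef)
    (hw0 : ∀ p ∈ U, 0 ≤ w p) (hg0 : ∀ p ∈ U, 0 ≤ g p) (hs : s ∈ Ioc 0 (1 / 2)) (hε : 0 < ε)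
    (hζ : IsTestFunction 1 U ζ) (hQ0 : ∀ p ∈ U, 0 ≤ Q p)
    (hQ : IntegrableOn (fun p => (1 + w p / ε) ^ (1 + s) * Q p) U)
    (hQt : ∀ p ∈ U, -pdT ζ p ≤ Q p)
    (hQx : ∀ᵐ p ∂volume.restrict U, coeffForm a p (gradX ζ p) (gradX ζ p) ≤ ζ p * Q p) :
    ∫ p in U, ζ p * g p ≤ (3 + 1 / s) * ε * ∫ p in U, (1 + w p / ε) ^ (1 + s) * Q p := by
  set h : ℝ → ℝ := fun y => 1 + (1 + y / ε) ^ (-s)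
  have hwV : MapsTo w U (Ioi (-ε)) := fun p hp => (neg_lt_zero.2 hε).trans_le (hw0 p hp)
  have hpow : ∀ p ∈ U, ∀ r : ℝ, 0 ≤ (1 + w p / ε) ^ r := fun p hp r =>
    rpow_nonneg (one_add_div_pos hε (hwV hp)).le r
  have hh : ContDiffOn ℝ 1 h (Ioi (-ε)) :=
    contDiffOn_const.add (contDiffOn_one_add_div_rpow hε _)
  have hderiv : ∀ p ∈ U, deriv h (w p) = -s / ε * (1 + w p / ε) ^ (-s - 1) := fun p hp =>
    ((hasDerivAt_one_add_div_rpow hε (-s) (hwV hp)).const_add 1).deriv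
  have henergy : ∫ p in U, ζ p * g p ≤ (∫ p in U, h (w p) * ζ p * pdT w p) +
      ∫ p in U, ε / s * ((1 + w p / ε) ^ (1 + s) * Q p) := by
    refine hsuper.setIntegral_mul_le_of_comp_mul hU ha hg0 isOpen_Ioi hwV hh
      (fun p hp => le_add_of_nonneg_right (hpow p hp _)) (fun p hp => ?_)
      hζ (hQ.const_mul (ε / s))
      (fun p hp => mul_nonneg (div_pos hε hs.1).le (mul_nonneg (hpow p hp _) (hQ0 p hp))) ?_
    · rw [hderiv p hp]
      exact mul_nonpos_of_nonpos_of_nonneg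
        (div_nonpos_of_nonpos_of_nonneg (neg_nonpos.2 hs.1.le) hε.le) (hpow p hp _)
    · filter_upwards [hQx, ae_restrict_mem hU.measurableSet] with p hp hpU
      rw [hderiv p hpU]
      exact one_add_rpow_neg_sq_mul_le hs.1 hε (hw0 p hpU) (hζ.nonneg p) (hQ0 p hpU) hp
  have htime : ∫ p in U, h (w p) * ζ p * pdT w p =
      -∫ p in U, energyProfile s ε (w p) * pdT ζ p := by
    rw [← setIntegral_deriv_comp_mul_pdT hU hsuper.contDiffOn isOpen_Ioi hwV
      (contDiffOn_energyProfile hε s) hζ]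
    exact setIntegral_congr_fun hU.measurableSet fun p hp => by
      simp only [h, deriv_energyProfile (show s ≠ 1 by linarith [hs.2]) hε (hwV hp)]
  have hF := neg_setIntegral_energyProfile_mul_pdT_le hU hsuper.contDiffOn hw0 hs hε hζ hQ0 hQ hQt
  rw [htime, integral_const_mul] at henergy
  refine henergy.trans ((add_le_add_left hF _).trans_eq ?_)
  rw [← add_mul]
  congr 1
  ring

end Caccioppoli

section Cutoff

variable {n : ℕ} {α c M R τ : ℝ} {a : Fin n → Fin n → Pt n → ℝ} {A : Pt n → ℝ} {p : Pt n}
  {h : ℝ → ℝ}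

lemma pdT_comp_fst (hh : DifferentiableAt ℝ h p.1) : pdT (fun p => h p.1) p = deriv h p.1 := by
  rw [pdT_comp (w := Prod.fst) hh differentiableAt_fst, pdT, fderiv_fst]
  simp only [ContinuousLinearMap.coe_fst', mul_one]

lemma gradX_comp_fst (hh : DifferentiableAt ℝ h p.1) : gradX (fun p => h p.1) p = 0 := by
  ext j
  rw [gradX_comp (w := Prod.fst) hh differentiableAt_fst]
  simp only [Pi.smul_apply, gradX, pdX, fderiv_fst, ContinuousLinearMap.coe_fst', smul_zero,
    Pi.zero_apply]

lemma fderiv_norm_sq_snd (p e : Pt n) :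
    fderiv ℝ (fun p : Pt n => ‖p.2‖ ^ 2) p e = 2 * inner ℝ p.2 e.2 := by
  rw [(HasFDerivAt.norm_sq (hasFDerivAt_snd (𝕜 := ℝ) (p := p))).fderiv]
  simp

lemma pdT_comp_norm_sq_snd (hh : DifferentiableAt ℝ h (‖p.2‖ ^ 2)) :
    pdT (fun p => h (‖p.2‖ ^ 2)) p = 0 := by
  rw [pdT_comp (w := fun p => ‖p.2‖ ^ 2) hh (differentiableAt_snd.norm_sq ℝ), pdT,
    fderiv_norm_sq_snd, inner_zero_right, mul_zero, mul_zero]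

lemma gradX_comp_norm_sq_snd (hh : DifferentiableAt ℝ h (‖p.2‖ ^ 2)) :
    gradX (fun p => h (‖p.2‖ ^ 2)) p = (2 * deriv h (‖p.2‖ ^ 2)) • p.2.ofLp := by
  ext j
  rw [gradX_comp (w := fun p => ‖p.2‖ ^ 2) hh (differentiableAt_snd.norm_sq ℝ)]
  simp only [Pi.smul_apply, gradX, pdX, fderiv_norm_sq_snd, EuclideanSpace.inner_single_right,
    smul_eq_mul, conj_trivial]
  ring

lemma deriv_comp_div_const (h : ℝ → ℝ) (b t : ℝ) :
    deriv (fun t => h (t / b)) t = deriv h (t / b) / b := by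
  simpa only [div_eq_inv_mul, smul_eq_mul] using deriv_comp_mul_left b⁻¹ h t

/-- A smooth cutoff of the line which is `1` on `(-∞, 1]` and vanishes on `[2, ∞)`. -/
def cutoffProfile (y : ℝ) : ℝ := smoothTransition (2 - y)

lemma contDiff_cutoffProfile : ContDiff ℝ 1 cutoffProfile :=
  smoothTransition.contDiff.comp (contDiff_const.sub contDiff_id)

lemma cutoffProfile_mem_Icc (y : ℝ) : cutoffProfile y ∈ Icc 0 1 :=
  ⟨smoothTransition.nonneg _, smoothTransition.le_one _⟩

lemma cutoffProfile_of_le_one {y : ℝ} (hy : y ≤ 1) : cutoffProfile y = 1 :=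
  smoothTransition.one_of_one_le (by linarith)

lemma cutoffProfile_of_two_le {y : ℝ} (hy : 2 ≤ y) : cutoffProfile y = 0 :=
  smoothTransition.zero_of_nonpos (by linarith)

lemma deriv_cutoffProfile_of_notMem {y : ℝ} (hy : y ∉ Ioo 1 2) : deriv cutoffProfile y = 0 := by
  rcases le_or_gt y 1 with h1 | h1
  · refine IsLocalMax.deriv_eq_zero (.of_forall fun x => ?_)
    rw [cutoffProfile_of_le_one h1]
    exact (cutoffProfile_mem_Icc x).2
  · refine IsLocalMin.deriv_eq_zero (.of_forall fun x => ?_)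
    rw [cutoffProfile_of_two_le (not_lt.1 fun h2 => hy ⟨h1, h2⟩)]
    exact (cutoffProfile_mem_Icc x).1

lemma exists_abs_deriv_cutoffProfile_le : ∃ M, ∀ y, |deriv cutoffProfile y| ≤ M :=
  (contDiff_cutoffProfile.continuous_deriv le_rfl).bounded_above_of_compact_support <|
    .intro isCompact_Icc fun _ hy => deriv_cutoffProfile_of_notMem fun h =>
      hy (Ioo_subset_Icc_self h)

/-- The space-time cylinder of height `h` over the closed ball of radius `r`. -/
def timeCylinder (n : ℕ) (h r : ℝ) : Set (Pt n) := Ioc 0 h ×ˢ closedBall 0 r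

/-- The region between the parabolic cylinders of scales `R` and `2R`, where the derivatives of
`boxCutoff` live. -/
def shell (n : ℕ) (α R : ℝ) : Set (Pt n) :=
  timeCylinder n (2 * R ^ α) (2 * R) \ timeCylinder n (R ^ α) R

lemma measurableSet_timeCylinder (n : ℕ) (h r : ℝ) : MeasurableSet (timeCylinder n h r) :=
  measurableSet_Ioc.prod measurableSet_closedBall

lemma measurableSet_shell (n : ℕ) (α R : ℝ) : MeasurableSet (shell n α R) :=
  (measurableSet_timeCylinder ..).diff (measurableSet_timeCylinder ..)

lemma volume_timeCylinder_ne_top (n : ℕ) (h r : ℝ) : volume (timeCylinder n h r) ≠ ⊤ :=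
  ((measure_mono (prod_mono_left Ioc_subset_Icc_self)).trans_lt
    (isCompact_Icc.prod (isCompact_closedBall 0 r)).measure_lt_top).ne

lemma volume_shell_ne_top (n : ℕ) (α R : ℝ) : volume (shell n α R) ≠ ⊤ :=
  measure_ne_top_of_subset sdiff_subset (volume_timeCylinder_ne_top n _ _)

lemma volume_real_shell_le (n : ℕ) (α : ℝ) :
    ∃ V, ∀ R, 0 < R → volume.real (shell n α R) ≤ V * R ^ (n + α) := by
  refine ⟨2 * 2 ^ n * volume.real (ball (0 : Xn n) 1), fun R hR => ?_⟩
  calc volume.real (shell n α R)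
      ≤ volume.real (timeCylinder n (2 * R ^ α) (2 * R)) :=
        measureReal_mono sdiff_subset (volume_timeCylinder_ne_top n _ _)
    _ = 2 * 2 ^ n * volume.real (ball (0 : Xn n) 1) * R ^ (n + α) := by
        rw [timeCylinder, Measure.volume_eq_prod, measureReal_prod_prod,
          volume_real_Ioc_of_le (by positivity),
            Measure.addHaar_real_closedBall _ _ (by positivity),
          finrank_euclideanSpace, Fintype.card_fin, rpow_add hR, rpow_natCast, mul_pow]
        ring

/-- The parabolic cutoff at scale `R`: it is `1` for `t ≤ R^α`, `|x| ≤ R` and vanishes unless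
`t ≤ 2R^α`, `|x| ≤ 2R`. -/
def boxCutoff (n : ℕ) (α R : ℝ) (p : Pt n) : ℝ :=
  cutoffProfile (p.1 / R ^ α) * cutoffProfile (‖p.2‖ ^ 2 / R ^ 2)

lemma differentiable_cutoffProfile_div (b : ℝ) : Differentiable ℝ fun t => cutoffProfile (t / b) :=
  (contDiff_cutoffProfile.differentiable one_ne_zero).comp (differentiable_id.div_const b)

lemma contDiff_boxCutoff (n : ℕ) (α R : ℝ) : ContDiff ℝ 1 (boxCutoff n α R) :=
  (contDiff_cutoffProfile.comp (contDiff_fst.div_const _)).mul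
    (contDiff_cutoffProfile.comp ((contDiff_snd.norm_sq ℝ).div_const _))

lemma boxCutoff_mem_Icc (n : ℕ) (α R : ℝ) (p : Pt n) : boxCutoff n α R p ∈ Icc 0 1 := by
  obtain ⟨ht0, ht1⟩ := cutoffProfile_mem_Icc (p.1 / R ^ α)
  obtain ⟨hx0, hx1⟩ := cutoffProfile_mem_Icc (‖p.2‖ ^ 2 / R ^ 2)
  exact ⟨mul_nonneg ht0 hx0, mul_le_one₀ ht1 hx0 hx1⟩

lemma boxCutoff_eq_one (hR : 0 < R) (hpt : p.1 ≤ R ^ α) (hpx : ‖p.2‖ ≤ R) :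
    boxCutoff n α R p = 1 := by
  rw [boxCutoff, cutoffProfile_of_le_one ((div_le_one (rpow_pos_of_pos hR α)).2 hpt),
    cutoffProfile_of_le_one ((div_le_one (by positivity)).2 (by gcongr)), one_mul]

lemma le_two_mul_of_cutoffProfile_time_ne_zero (hR : 0 < R)
    (hp : cutoffProfile (p.1 / R ^ α) ≠ 0) : p.1 ≤ 2 * R ^ α :=
  (div_le_iff₀ (rpow_pos_of_pos hR α)).1 <| not_lt.1 fun h => hp (cutoffProfile_of_two_le h.le)

lemma norm_le_two_mul_of_cutoffProfile_space_ne_zero (hR : 0 < R)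
    (hp : cutoffProfile (‖p.2‖ ^ 2 / R ^ 2) ≠ 0) : ‖p.2‖ ≤ 2 * R := by
  refine not_lt.1 fun h => hp (cutoffProfile_of_two_le ?_)
  rw [le_div_iff₀ (by positivity)]
  nlinarith

lemma mem_of_boxCutoff_ne_zero (hR : 0 < R) (hp : boxCutoff n α R p ≠ 0) :
    p.1 ≤ 2 * R ^ α ∧ p.2 ∈ closedBall 0 (2 * R) :=
  ⟨le_two_mul_of_cutoffProfile_time_ne_zero hR (left_ne_zero_of_mul hp),
    mem_closedBall_zero_iff.2 <|
      norm_le_two_mul_of_cutoffProfile_space_ne_zero hR (right_ne_zero_of_mul hp)⟩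

lemma pdT_boxCutoff (p : Pt n) : pdT (boxCutoff n α R) p =
    cutoffProfile (‖p.2‖ ^ 2 / R ^ 2) * (deriv cutoffProfile (p.1 / R ^ α) / R ^ α) := by
  have ht := differentiable_cutoffProfile_div (R ^ α) p.1
  have hx := differentiable_cutoffProfile_div (R ^ 2) (‖p.2‖ ^ 2)
  unfold boxCutoff
  rw [pdT_mul (ht.fun_comp' p differentiableAt_fst)
    (hx.fun_comp' p (differentiableAt_snd.norm_sq ℝ)), pdT_comp_fst ht, pdT_comp_norm_sq_snd hx,
    deriv_comp_div_const, mul_zero, zero_add]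

lemma gradX_boxCutoff (p : Pt n) : gradX (boxCutoff n α R) p =
    (cutoffProfile (p.1 / R ^ α) * (2 * (deriv cutoffProfile (‖p.2‖ ^ 2 / R ^ 2) / R ^ 2))) •
      p.2.ofLp := by
  have ht := differentiable_cutoffProfile_div (R ^ α) p.1
  have hx := differentiable_cutoffProfile_div (R ^ 2) (‖p.2‖ ^ 2)
  unfold boxCutoff
  rw [gradX_mul (ht.fun_comp' p differentiableAt_fst)
    (hx.fun_comp' p (differentiableAt_snd.norm_sq ℝ)), gradX_comp_fst ht,
    gradX_comp_norm_sq_snd hx, deriv_comp_div_const, smul_zero, add_zero, smul_smul]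

lemma mem_shell (hp : p ∈ halfSpace n) (hpt : p.1 ≤ 2 * R ^ α) (hpx : ‖p.2‖ ≤ 2 * R)
    (hout : p.1 ≤ R ^ α → R < ‖p.2‖) : p ∈ shell n α R :=
  ⟨⟨⟨hp, hpt⟩, mem_closedBall_zero_iff.2 hpx⟩, fun hin =>
    (hout hin.1.2).not_ge (mem_closedBall_zero_iff.1 hin.2)⟩

lemma abs_pdT_boxCutoff_le (hR : 0 < R) (hM : ∀ y, |deriv cutoffProfile y| ≤ M)
    (hp : p ∈ halfSpace n) :
    |pdT (boxCutoff n α R) p| ≤ (shell n α R).indicator (fun _ => M * R ^ (-α)) p := by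
  have hRα := rpow_pos_of_pos hR α
  obtain ⟨hx0, hx1⟩ := cutoffProfile_mem_Icc (‖p.2‖ ^ 2 / R ^ 2)
  rw [pdT_boxCutoff]
  by_cases hzero : cutoffProfile (‖p.2‖ ^ 2 / R ^ 2) = 0 ∨ p.1 / R ^ α ∉ Ioo 1 2
  · have : cutoffProfile (‖p.2‖ ^ 2 / R ^ 2) * (deriv cutoffProfile (p.1 / R ^ α) / R ^ α) = 0 := by
      rcases hzero with h | h
      · rw [h, zero_mul]
      · rw [deriv_cutoffProfile_of_notMem h, zero_div, mul_zero]
    rw [this, abs_zero]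
    exact indicator_nonneg (fun _ _ => mul_nonneg ((abs_nonneg _).trans (hM 0))
      (rpow_nonneg hR.le _)) p
  · push Not at hzero
    obtain ⟨hx, hlo, hhi⟩ := hzero
    rw [one_lt_div hRα] at hlo
    rw [div_lt_iff₀ hRα] at hhi
    rw [indicator_of_mem (mem_shell hp hhi.le
      (norm_le_two_mul_of_cutoffProfile_space_ne_zero hR hx) fun h => absurd hlo h.not_gt),
      abs_mul, abs_div, abs_of_nonneg hx0, abs_of_pos hRα, rpow_neg hR.le, ← div_eq_mul_inv]
    exact (mul_le_of_le_one_left (by positivity) hx1).trans (by gcongr; exact hM _)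

lemma coeffForm_smul_ofLp_le (hA : ∀ ξ : Xn n, ∑ i, ∑ j, a i j p * ξ i * ξ j ≤ A p * ‖ξ‖ ^ 2)
    (k : ℝ) (ξ : Xn n) :
    coeffForm a p (k • ξ.ofLp) (k • ξ.ofLp) ≤ k ^ 2 * (A p * ‖ξ‖ ^ 2) := by
  rw [map_smul, map_smul, LinearMap.smul_apply, smul_smul, smul_eq_mul, ← sq, coeffForm_apply]
  exact mul_le_mul_of_nonneg_left (hA ξ) (sq_nonneg k)

lemma coeffForm_gradX_boxCutoff_le (hR : 0 < R) (hc : 0 ≤ c)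
    (hM : ∀ y, |deriv cutoffProfile y| ≤ M) (hp : p ∈ halfSpace n)
    (hA : ∀ ξ : Xn n, ∑ i, ∑ j, a i j p * ξ i * ξ j ≤ A p * ‖ξ‖ ^ 2)
    (hAp : R < ‖p.2‖ → ‖p.2‖ < 2 * R → A p ≤ c * (2 * R) ^ (2 - α)) :
    coeffForm a p (gradX (boxCutoff n α R) p) (gradX (boxCutoff n α R) p) ≤
      (shell n α R).indicator (fun _ => 16 * c * M ^ 2 * 2 ^ (2 - α) * R ^ (-α)) p := by
  obtain ⟨ht0, ht1⟩ := cutoffProfile_mem_Icc (p.1 / R ^ α)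
  rw [gradX_boxCutoff]
  set k := cutoffProfile (p.1 / R ^ α) * (2 * (deriv cutoffProfile (‖p.2‖ ^ 2 / R ^ 2) / R ^ 2))
  by_cases hzero : cutoffProfile (p.1 / R ^ α) = 0 ∨ ‖p.2‖ ^ 2 / R ^ 2 ∉ Ioo 1 2
  · have : k = 0 := by
      rcases hzero with h | h
      · simp only [k, h, zero_mul]
      · simp only [k, deriv_cutoffProfile_of_notMem h, zero_div, mul_zero]
    rw [this, zero_smul, map_zero]
    exact indicator_nonneg (fun _ _ => by positivity) p
  · push Not at hzero
    obtain ⟨ht, hlo, hhi⟩ := hzero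
    rw [one_lt_div (by positivity), sq_lt_sq₀ hR.le (norm_nonneg _)] at hlo
    have hhi : ‖p.2‖ < 2 * R := by
      rw [div_lt_iff₀ (by positivity)] at hhi
      nlinarith
    rw [indicator_of_mem (mem_shell hp (le_two_mul_of_cutoffProfile_time_ne_zero hR ht) hhi.le
      fun _ => hlo)]
    have hk : |k| ≤ 2 * (M / R ^ 2) := by
      rw [abs_mul, abs_mul, abs_div, abs_two, abs_of_nonneg ht0, abs_of_pos (pow_pos hR 2)]
      exact (mul_le_of_le_one_left (by positivity) ht1).trans (by gcongr; exact hM _)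
    calc coeffForm a p (k • p.2.ofLp) (k • p.2.ofLp)
        ≤ k ^ 2 * (A p * ‖p.2‖ ^ 2) := coeffForm_smul_ofLp_le hA k p.2
      _ ≤ k ^ 2 * (c * (2 * R) ^ (2 - α) * (2 * R) ^ 2) := by
        gcongr
        exact hAp hlo hhi
      _ ≤ (2 * (M / R ^ 2)) ^ 2 * (c * (2 * R) ^ (2 - α) * (2 * R) ^ 2) := by
        rw [← sq_abs k]
        gcongr
      _ = 16 * c * M ^ 2 * 2 ^ (2 - α) * R ^ (-α) := by
        rw [mul_rpow zero_le_two hR.le, sub_eq_add_neg 2 α, rpow_add hR 2, rpow_two]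
        field_simp
        ring

lemma Cond8.ae_halfSpace (hcond : Cond8 A α c) (hR : 1 < R) :
    ∀ᵐ p ∂volume.restrict (halfSpace n), R / 2 < ‖p.2‖ → ‖p.2‖ < R → A p ≤ c * R ^ (2 - α) := by
  have hmeas : MeasurableSet {p : Pt n | 0 < p.1 ∧ R / 2 < ‖p.2‖ ∧ ‖p.2‖ < R} :=
    ((isOpen_lt continuous_const continuous_fst).inter
      ((isOpen_lt continuous_const continuous_snd.norm).inter
        (isOpen_lt continuous_snd.norm continuous_const))).measurableSet
  filter_upwards [ae_restrict_of_ae ((ae_restrict_iff' hmeas).1 (hcond R hR)),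
    ae_restrict_mem (isOpen_halfSpace n).measurableSet] with p hp hpS hlo hhi
  exact hp ⟨hpS, hlo, hhi⟩

lemma exists_boxCutoff_bound (hc : 0 ≤ c)
    (hA : ∀ᵐ p ∂volume.restrict (halfSpace n), ∀ ξ : Xn n,
      ∑ i, ∑ j, a i j p * ξ i * ξ j ≤ A p * ‖ξ‖ ^ 2)
    (hcond : Cond8 A α c) :
    ∃ L, 0 ≤ L ∧ ∀ R, 1 ≤ R →
      (∀ p ∈ halfSpace n, |pdT (boxCutoff n α R) p| ≤
        (shell n α R).indicator (fun _ => L * R ^ (-α)) p) ∧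
      ∀ᵐ p ∂volume.restrict (halfSpace n),
        coeffForm a p (gradX (boxCutoff n α R) p) (gradX (boxCutoff n α R) p) ≤
          (shell n α R).indicator (fun _ => L * R ^ (-α)) p := by
  obtain ⟨M, hM⟩ := exists_abs_deriv_cutoffProfile_le
  have hM0 : 0 ≤ M := (abs_nonneg _).trans (hM 0)
  set K := 16 * c * M ^ 2 * 2 ^ (2 - α)
  refine ⟨max M K, hM0.trans (le_max_left _ _), fun R hR => ?_⟩
  have hR0 : 0 < R := one_pos.trans_le hR
  have hind : ∀ L' ≤ max M K, ∀ p, (shell n α R).indicator (fun _ => L' * R ^ (-α)) p ≤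
      (shell n α R).indicator (fun _ => max M K * R ^ (-α)) p := fun L' hL' p =>
    indicator_le_indicator (mul_le_mul_of_nonneg_right hL' (rpow_nonneg hR0.le _))
  refine ⟨fun p hp => (abs_pdT_boxCutoff_le hR0 hM hp).trans (hind M (le_max_left _ _) p), ?_⟩
  filter_upwards [hA, hcond.ae_halfSpace (by linarith : 1 < 2 * R),
    ae_restrict_mem (isOpen_halfSpace n).measurableSet] with p hAp hcp hp
  refine (coeffForm_gradX_boxCutoff_le hR0 hc hM hp hAp ?_).trans (hind K (le_max_right _ _) p)
  rwa [mul_div_cancel_left₀ R two_ne_zero] at hcp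

end Cutoff

section EnergyAtScale

variable {n : ℕ} {α τ R : ℝ} {a : Fin n → Fin n → Pt n → ℝ} {T χ : Pt n → ℝ} {p : Pt n}

/-- A cutoff in time, vanishing for `t ≤ τ` and positive for `t > τ`. -/
def timeCutoff (n : ℕ) (τ : ℝ) (p : Pt n) : ℝ := smoothTransition (p.1 / τ - 1)

lemma contDiff_timeCutoff (n : ℕ) (τ : ℝ) : ContDiff ℝ 1 (timeCutoff n τ) :=
  smoothTransition.contDiff.comp ((contDiff_fst.div_const τ).sub contDiff_const)

lemma timeCutoff_mem_Icc (n : ℕ) (τ : ℝ) (p : Pt n) : timeCutoff n τ p ∈ Icc 0 1 :=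
  ⟨smoothTransition.nonneg _, smoothTransition.le_one _⟩

lemma timeCutoff_pos (hτ : 0 < τ) (hp : τ < p.1) : 0 < timeCutoff n τ p :=
  smoothTransition.pos_of_pos (sub_pos.2 ((one_lt_div hτ).2 hp))

lemma tsupport_timeCutoff_subset (n : ℕ) (hτ : 0 < τ) :
    tsupport (timeCutoff n τ) ⊆ {p | τ ≤ p.1} :=
  closure_minimal (fun _ hp => not_lt.1 fun h => hp (smoothTransition.zero_of_nonpos
    (sub_nonpos.2 ((div_le_one hτ).2 h.le)))) (isClosed_le continuous_const continuous_fst)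

lemma differentiable_smoothTransition_div_sub_one (τ : ℝ) :
    Differentiable ℝ fun t => smoothTransition (t / τ - 1) :=
  (smoothTransition.contDiff (n := 1).differentiable one_ne_zero).comp
    ((differentiable_id.div_const τ).sub_const 1)

lemma gradX_timeCutoff (τ : ℝ) (p : Pt n) : gradX (timeCutoff n τ) p = 0 :=
  gradX_comp_fst (differentiable_smoothTransition_div_sub_one τ p.1)

lemma pdT_timeCutoff_nonneg (hτ : 0 < τ) (p : Pt n) : 0 ≤ pdT (timeCutoff n τ) p := by
  unfold timeCutoff
  rw [pdT_comp_fst (differentiable_smoothTransition_div_sub_one τ p.1)]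
  refine Monotone.deriv_nonneg fun x y hxy => smoothTransition.monotone ?_
  gcongr

lemma neg_pdT_mul_pow_succ_le (m : ℕ) (hT : DifferentiableAt ℝ T p) (hχ : DifferentiableAt ℝ χ p)
    (hT0 : 0 ≤ T p) (hTt : 0 ≤ pdT T p) (hχ0 : 0 ≤ χ p) :
    -pdT (fun p => T p * χ p ^ (m + 1)) p ≤ (m + 1) * (T p * χ p ^ m) * |pdT χ p| := by
  rw [pdT_mul hT (hχ.fun_pow _), pdT_comp (h := (· ^ (m + 1))) (by fun_prop) hχ, deriv_pow_field]
  have hcross : 0 ≤ χ p ^ (m + 1) * pdT T p := by positivity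
  have habs : (m + 1) * (T p * χ p ^ m) * -pdT χ p ≤ (m + 1) * (T p * χ p ^ m) * |pdT χ p| := by
    gcongr
    exact neg_le_abs _
  simp only [Nat.add_sub_cancel]
  push_cast
  linarith

lemma gradX_mul_pow_succ (m : ℕ) (hT : DifferentiableAt ℝ T p) (hχ : DifferentiableAt ℝ χ p)
    (hTx : gradX T p = 0) :
    gradX (fun p => T p * χ p ^ (m + 1)) p = ((m + 1) * (T p * χ p ^ m)) • gradX χ p := by
  rw [gradX_mul hT (hχ.fun_pow _), gradX_comp (h := (· ^ (m + 1))) (by fun_prop) hχ,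
    deriv_pow_field, hTx, smul_zero, add_zero, smul_smul, Nat.add_sub_cancel]
  push_cast
  congr 1
  ring

/-- The test functions of the argument: a time cutoff away from the initial hyperplane times a
power of the parabolic cutoff at scale `R`. -/
def scaleCutoff (n : ℕ) (α τ R : ℝ) (m : ℕ) (p : Pt n) : ℝ :=
  timeCutoff n τ p * boxCutoff n α R p ^ m

lemma scaleCutoff_nonneg (n : ℕ) (α τ R : ℝ) (m : ℕ) (p : Pt n) : 0 ≤ scaleCutoff n α τ R m p :=
  mul_nonneg (timeCutoff_mem_Icc n τ p).1 (pow_nonneg (boxCutoff_mem_Icc n α R p).1 m)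

lemma isTestFunction_scaleCutoff (n : ℕ) (α : ℝ) (hτ : 0 < τ) (hR : 0 < R) {m : ℕ} (hm : m ≠ 0) :
    IsTestFunction 1 (halfSpace n) (scaleCutoff n α τ R m) := by
  have hsub : tsupport (scaleCutoff n α τ R m) ⊆
      Icc τ (2 * R ^ α) ×ˢ closedBall (0 : Xn n) (2 * R) := by
    refine closure_minimal (fun p hp => ?_) (isClosed_Icc.prod isClosed_closedBall)
    obtain ⟨hpt, hpx⟩ := mem_of_boxCutoff_ne_zero hR (ne_zero_pow hm (right_ne_zero_of_mul hp))
    exact ⟨⟨tsupport_timeCutoff_subset n hτ (subset_tsupport _ (left_ne_zero_of_mul hp)), hpt⟩, hpx⟩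
  exact {
    contDiff := (contDiff_timeCutoff n τ).mul ((contDiff_boxCutoff n α R).pow m)
    hasCompactSupport :=
      (isCompact_Icc.prod (isCompact_closedBall 0 _)).of_isClosed_subset isClosed_closure hsub
    tsupport_subset := fun p hp => hτ.trans_le (hsub hp).1.1
    nonneg := scaleCutoff_nonneg n α τ R m }

variable {w g f : Pt n → ℝ} {s ε L : ℝ} {l : ℕ}

lemma integrable_mul_scaleCutoff (α : ℝ) (hf : ContinuousOn f (halfSpace n)) (hτ : 0 < τ)
    (hR : 0 < R) (hl : l ≠ 0) : Integrable (fun p => f p * scaleCutoff n α τ R l p) :=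
  have hη := isTestFunction_scaleCutoff n α hτ hR hl
  integrable_mul_of_tsupport_subset (isOpen_halfSpace n).measurableSet hf
    hη.contDiff.continuous hη.hasCompactSupport hη.tsupport_subset

lemma shell_subset_halfSpace (n : ℕ) (α R : ℝ) : shell n α R ⊆ halfSpace n := fun _ hp => hp.1.1.1

lemma neg_pdT_scaleCutoff_le {D : Set (Pt n)} (hτ : 0 < τ) (l : ℕ)
    (hχt : |pdT (boxCutoff n α R) p| ≤ D.indicator (fun _ => L) p) :
    -pdT (scaleCutoff n α τ R (l + 2)) p ≤
      D.indicator (fun p => (l + 2) ^ 2 * L * scaleCutoff n α τ R l p) p := by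
  obtain ⟨hT0, -⟩ := timeCutoff_mem_Icc n τ p
  obtain ⟨hχ0, hχ1⟩ := boxCutoff_mem_Icc n α R p
  have hpdT := neg_pdT_mul_pow_succ_le (l + 1) ((contDiff_timeCutoff n τ).differentiable_one p)
    ((contDiff_boxCutoff n α R).differentiable_one p) hT0 (pdT_timeCutoff_nonneg hτ p) hχ0
  push_cast at hpdT
  refine hpdT.trans ?_
  by_cases hp : p ∈ D
  · rw [indicator_of_mem hp] at hχt ⊢
    have hL : 0 ≤ L := (abs_nonneg _).trans hχt
    calc ((l : ℝ) + 1 + 1) * (timeCutoff n τ p * boxCutoff n α R p ^ (l + 1)) *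
          |pdT (boxCutoff n α R) p|
        ≤ (l + 2) ^ 2 * (timeCutoff n τ p * boxCutoff n α R p ^ l) * L := by
          gcongr ?_ * (_ * ?_) * ?_
          · nlinarith
          · exact pow_le_pow_of_le_one hχ0 hχ1 l.le_succ
      _ = (l + 2) ^ 2 * L * scaleCutoff n α τ R l p := by rw [scaleCutoff]; ring
  · rw [indicator_of_notMem hp] at hχt ⊢
    exact mul_nonpos_of_nonneg_of_nonpos (by positivity) hχt

lemma coeffForm_gradX_scaleCutoff_le {D : Set (Pt n)} (l : ℕ)
    (hχx : coeffForm a p (gradX (boxCutoff n α R) p) (gradX (boxCutoff n α R) p) ≤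
      D.indicator (fun _ => L) p) :
    coeffForm a p (gradX (scaleCutoff n α τ R (l + 2)) p) (gradX (scaleCutoff n α τ R (l + 2)) p) ≤
      scaleCutoff n α τ R (l + 2) p *
        D.indicator (fun p => (l + 2) ^ 2 * L * scaleCutoff n α τ R l p) p := by
  have hgrad : gradX (scaleCutoff n α τ R (l + 2)) p =
      (((l + 1 : ℕ) + 1) * (timeCutoff n τ p * boxCutoff n α R p ^ (l + 1))) •
        gradX (boxCutoff n α R) p :=
    gradX_mul_pow_succ (l + 1) ((contDiff_timeCutoff n τ).differentiable_one p)
      ((contDiff_boxCutoff n α R).differentiable_one p) (gradX_timeCutoff τ p)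
  rw [hgrad, map_smul, map_smul, LinearMap.smul_apply, smul_smul, smul_eq_mul, ← sq]
  refine (mul_le_mul_of_nonneg_left hχx (sq_nonneg _)).trans_eq ?_
  by_cases hp : p ∈ D
  · rw [indicator_of_mem hp, indicator_of_mem hp, scaleCutoff, scaleCutoff]
    push_cast
    ring
  · rw [indicator_of_notMem hp, indicator_of_notMem hp, mul_zero, mul_zero]

lemma continuousOn_one_add_div_rpow {U : Set (Pt n)} (hε : 0 < ε) (hw : ContinuousOn w U)
    (hw0 : ∀ p ∈ U, 0 ≤ w p) (r : ℝ) : ContinuousOn (fun p => (1 + w p / ε) ^ r) U :=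
  (contDiffOn_one_add_div_rpow hε r).continuousOn.comp hw
    fun p hp => (neg_lt_zero.2 hε).trans_le (hw0 p hp)

lemma IsWeakSupersolution.setIntegral_scaleCutoff_mul_le
    (hsuper : IsWeakSupersolution (halfSpace n) a w g)
    (ha : ∀ᵐ p ∂volume.restrict (halfSpace n), (coeffForm a p).IsPosSemidef)
    (hw0 : ∀ p ∈ halfSpace n, 0 ≤ w p) (hg0 : ∀ p ∈ halfSpace n, 0 ≤ g p)
    (hs : s ∈ Ioc 0 (1 / 2)) (hε : 0 < ε) (hτ : 0 < τ) (hR : 0 < R) (hl : l ≠ 0)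
    (hχt : ∀ p ∈ halfSpace n,
      |pdT (boxCutoff n α R) p| ≤ (shell n α R).indicator (fun _ => L) p)
    (hχx : ∀ᵐ p ∂volume.restrict (halfSpace n),
      coeffForm a p (gradX (boxCutoff n α R) p) (gradX (boxCutoff n α R) p) ≤
        (shell n α R).indicator (fun _ => L) p) :
    ∫ p in halfSpace n, scaleCutoff n α τ R (l + 2) p * g p ≤
      (3 + 1 / s) * (l + 2) ^ 2 * (ε * L) *
        ∫ p in shell n α R, (1 + w p / ε) ^ (1 + s) * scaleCutoff n α τ R l p := by
  have hshell := measurableSet_shell n α R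
  set Q : Pt n → ℝ :=
    (shell n α R).indicator fun p => (l + 2) ^ 2 * L * scaleCutoff n α τ R l p
  have hL : ∀ p ∈ shell n α R, 0 ≤ L := fun p hp => (abs_nonneg _).trans <|
    (hχt p (shell_subset_halfSpace n α R hp)).trans_eq (indicator_of_mem hp _)
  have hQ : (fun p => (1 + w p / ε) ^ (1 + s) * Q p) = (shell n α R).indicator fun p =>
      (l + 2) ^ 2 * L * ((1 + w p / ε) ^ (1 + s) * scaleCutoff n α τ R l p) := by
    ext p
    by_cases hp : p ∈ shell n α R
    · simp only [Q, indicator_of_mem hp]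
      ring
    · simp only [Q, indicator_of_notMem hp, mul_zero]
  have hint := integrable_mul_scaleCutoff α
    (continuousOn_one_add_div_rpow hε hsuper.contDiffOn.continuousOn hw0 (1 + s)) hτ hR hl
  have henergy := hsuper.setIntegral_mul_le (isOpen_halfSpace n) ha hw0 hg0 hs hε
    (isTestFunction_scaleCutoff n α hτ hR (by omega : l + 2 ≠ 0)) (Q := Q)
    (fun p hp => indicator_nonneg (fun p hp => mul_nonneg (mul_nonneg (sq_nonneg _) (hL p hp))
      (scaleCutoff_nonneg n α τ R l p)) p)
    (hQ ▸ ((hint.const_mul _).indicator hshell).integrableOn)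
    (fun p hp => neg_pdT_scaleCutoff_le hτ l (hχt p hp))
    (hχx.mono fun p hp => coeffForm_gradX_scaleCutoff_le l hp)
  rw [hQ, setIntegral_indicator hshell, inter_eq_right.2 (shell_subset_halfSpace n α R),
    integral_const_mul] at henergy
  exact henergy.trans_eq (by ring)

end EnergyAtScale

section Absorption

lemma exists_rpow_le_mul_add {θ : ℝ} (hθ : θ ∈ Ico 0 1) {δ : ℝ} (hδ : 0 < δ) :
    ∃ M, ∀ y, 0 ≤ y → y ^ θ ≤ δ * y + M := by
  have hθ' : 0 < 1 - θ := sub_pos.2 hθ.2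
  refine ⟨δ ^ (-(θ / (1 - θ))), fun y hy => ?_⟩
  calc y ^ θ = (δ * y) ^ θ * (δ ^ (-(θ / (1 - θ)))) ^ (1 - θ) := by
        rw [← rpow_mul hδ.le, neg_mul, div_mul_cancel₀ θ hθ'.ne', mul_rpow hδ.le hy, mul_right_comm,
          ← rpow_add hδ, add_neg_cancel, rpow_zero, one_mul]
    _ ≤ θ * (δ * y) + (1 - θ) * δ ^ (-(θ / (1 - θ))) :=
        geom_mean_le_arith_mean2_weighted hθ.1 hθ'.le (by positivity) (by positivity) (by ring)
    _ ≤ δ * y + δ ^ (-(θ / (1 - θ))) := by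
        have hM : 0 < δ ^ (-(θ / (1 - θ))) := rpow_pos_of_pos hδ _
        have hδy : 0 ≤ δ * y := by positivity
        exact add_le_add (mul_le_of_le_one_left hδy hθ.2.le)
          (mul_le_of_le_one_left hM.le (by linarith [hθ.1]))

lemma one_add_rpow_le {r z : ℝ} (hr : 0 ≤ r) (hz : 0 ≤ z) : (1 + z) ^ r ≤ 2 ^ r * (z ^ r + 1) := by
  have hzr : 0 ≤ z ^ r := rpow_nonneg hz r
  rcases le_total z 1 with h | h
  · exact (rpow_le_rpow (by linarith) (by linarith) hr).trans
      (le_mul_of_one_le_right (by positivity) (le_add_of_nonneg_left hzr))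
  · refine (rpow_le_rpow (by linarith) (by linarith : 1 + z ≤ 2 * z) hr).trans ?_
    rw [mul_rpow zero_le_two hz]
    gcongr
    exact le_add_of_nonneg_right zero_le_one

lemma exists_one_add_rpow_mul_pow_le {r q : ℝ} (hr : 0 ≤ r) (hrq : r < q) :
    ∃ l : ℕ, l ≠ 0 ∧ ∀ δ : ℝ, 0 < δ → ∃ M, ∀ z χ : ℝ, 0 ≤ z → χ ∈ Icc 0 1 →
      (1 + z) ^ r * χ ^ l ≤ δ * (z ^ q * χ ^ (l + 2)) + M := by
  have hq : 0 < q := hr.trans_lt hrq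
  obtain ⟨l, hl⟩ := exists_nat_gt (2 * r / (q - r))
  have hl0 : l ≠ 0 := Nat.cast_pos'.1 (lt_of_le_of_lt
    (div_nonneg (by positivity) (sub_pos.2 hrq).le) hl) |>.ne'
  refine ⟨l, hl0, fun δ hδ => ?_⟩
  have h2r : (0 : ℝ) < 2 ^ r := by positivity
  obtain ⟨M, hM⟩ := exists_rpow_le_mul_add (θ := r / q)
    ⟨div_nonneg hr hq.le, (div_lt_one hq).2 hrq⟩ (div_pos hδ h2r)
  refine ⟨2 ^ r * (M + 1), fun z χ hz hχ => ?_⟩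
  have hexp : r / q * (l + 2 : ℕ) ≤ l := by
    rw [div_lt_iff₀ (sub_pos.2 hrq)] at hl
    rw [div_mul_eq_mul_div, div_le_iff₀ hq]
    push_cast
    linarith
  have hpow : z ^ r * χ ^ l ≤ (z ^ q * χ ^ (l + 2)) ^ (r / q) :=
    calc z ^ r * χ ^ l = z ^ r * χ ^ (l : ℝ) := by rw [rpow_natCast]
      _ ≤ z ^ r * χ ^ (r / q * (l + 2 : ℕ)) :=
          mul_le_mul_of_nonneg_left (rpow_le_rpow_of_exponent_ge' hχ.1 hχ.2 (by positivity) hexp)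
            (rpow_nonneg hz r)
      _ = (z ^ q * χ ^ (l + 2)) ^ (r / q) := by
          rw [mul_rpow (rpow_nonneg hz q) (pow_nonneg hχ.1 _), ← rpow_mul hz,
            mul_div_cancel₀ r hq.ne', mul_comm (r / q), rpow_natCast_mul hχ.1]
  calc (1 + z) ^ r * χ ^ l ≤ 2 ^ r * (z ^ r + 1) * χ ^ l := by
        gcongr
        · exact pow_nonneg hχ.1 l
        · exact one_add_rpow_le hr hz
    _ = 2 ^ r * (z ^ r * χ ^ l + χ ^ l) := by ring
    _ ≤ 2 ^ r * (δ / 2 ^ r * (z ^ q * χ ^ (l + 2)) + M + 1) := by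
        gcongr
        · exact hpow.trans (hM _ (mul_nonneg (rpow_nonneg hz q) (pow_nonneg hχ.1 _)))
        · exact pow_le_one₀ hχ.1 hχ.2
    _ = δ * (z ^ q * χ ^ (l + 2)) + 2 ^ r * (M + 1) := by field_simp; ring

variable {n l : ℕ} {α τ R ε κ δ M q r k L : ℝ} {w g : Pt n → ℝ}
  {a : Fin n → Fin n → Pt n → ℝ} {A : Pt n → ℝ}

lemma integrable_rpow_mul_scaleCutoff (α : ℝ) (hw : ContinuousOn w (halfSpace n)) (hq : 0 ≤ q)
    (hτ : 0 < τ) (hR : 0 < R) (hl : l ≠ 0) :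
    Integrable (fun p => w p ^ q * scaleCutoff n α τ R l p) :=
  integrable_mul_scaleCutoff α (hw.rpow_const fun _ _ => .inr hq) hτ hR hl

lemma setIntegral_one_add_div_rpow_mul_scaleCutoff_le
    (hyoung : ∀ z χ : ℝ, 0 ≤ z → χ ∈ Icc 0 1 →
      (1 + z) ^ r * χ ^ l ≤ δ * (z ^ q * χ ^ (l + 2)) + M)
    (hl : l ≠ 0) (hq : 0 ≤ q) (hw : ContinuousOn w (halfSpace n))
    (hw0 : ∀ p ∈ halfSpace n, 0 ≤ w p) (hε : 0 < ε) (hτ : 0 < τ) (hR : 0 < R) :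
    ∫ p in shell n α R, (1 + w p / ε) ^ r * scaleCutoff n α τ R l p ≤
      δ * ε ^ (-q) * (∫ p in shell n α R, w p ^ q * scaleCutoff n α τ R (l + 2) p) +
        M * volume.real (shell n α R) := by
  have hM : 0 ≤ M := by simpa [hl] using hyoung 0 0 le_rfl ⟨le_rfl, zero_le_one⟩
  have hmain := (integrable_rpow_mul_scaleCutoff α hw hq hτ hR (by omega : l + 2 ≠ 0)).const_mul
    (δ * ε ^ (-q))
  have hconst : IntegrableOn (fun _ => M) (shell n α R) :=
    integrableOn_const (volume_shell_ne_top n α R)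
  calc ∫ p in shell n α R, (1 + w p / ε) ^ r * scaleCutoff n α τ R l p
      ≤ ∫ p in shell n α R, (δ * ε ^ (-q) * (w p ^ q * scaleCutoff n α τ R (l + 2) p) + M) := by
        refine setIntegral_mono_on (integrable_mul_scaleCutoff α
          (continuousOn_one_add_div_rpow hε hw hw0 r) hτ hR hl).integrableOn
          (hmain.integrableOn.add hconst) (measurableSet_shell n α R) fun p hp => ?_
        have hwp := hw0 p (shell_subset_halfSpace n α R hp)
        obtain ⟨hT0, hT1⟩ := timeCutoff_mem_Icc n τ p
        calc (1 + w p / ε) ^ r * scaleCutoff n α τ R l p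
            = timeCutoff n τ p * ((1 + w p / ε) ^ r * boxCutoff n α R p ^ l) := by
              rw [scaleCutoff]; ring
          _ ≤ timeCutoff n τ p * (δ * ((w p / ε) ^ q * boxCutoff n α R p ^ (l + 2)) + M) :=
              mul_le_mul_of_nonneg_left (hyoung _ _ (by positivity) (boxCutoff_mem_Icc n α R p)) hT0
          _ = δ * ε ^ (-q) * (w p ^ q * scaleCutoff n α τ R (l + 2) p) + timeCutoff n τ p * M := by
              rw [scaleCutoff, div_rpow hwp hε.le, rpow_neg hε.le]; ring
          _ ≤ δ * ε ^ (-q) * (w p ^ q * scaleCutoff n α τ R (l + 2) p) + M := by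
              gcongr
              exact mul_le_of_le_one_left hM hT1
    _ = _ := by
        rw [integral_add hmain.integrableOn hconst, integral_const_mul, setIntegral_const,
          smul_eq_mul, mul_comm (volume.real _)]

-- The amplitude `ε = κ R ^ (-α / (q - 1))` makes the energy inequality scale invariant.
lemma scaling_main_term (hq : q ≠ 1) (hκ : 0 < κ) (hR : 0 < R) :
    κ * R ^ (-(α / (q - 1))) * R ^ (-α) * (κ * R ^ (-(α / (q - 1)))) ^ (-q) = κ ^ (1 - q) := by
  have hexp : -(α / (q - 1)) + -α + -(α / (q - 1)) * -q = 0 := by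
    have := sub_ne_zero.2 hq
    field_simp
    ring
  rw [mul_rpow hκ.le (by positivity), ← rpow_mul hR.le, sub_eq_add_neg 1 q, rpow_add hκ, rpow_one]
  calc _ = κ * κ ^ (-q) * (R ^ (-(α / (q - 1))) * R ^ (-α) * R ^ (-(α / (q - 1)) * -q)) := by ring
    _ = κ * κ ^ (-q) := by rw [← rpow_add hR, ← rpow_add hR, hexp, rpow_zero, mul_one]

lemma scaling_volume_term_le (hq : 1 < q) (hcrit : n * (q - 1) ≤ α) (hκ : 0 < κ) (hR : 1 ≤ R) :
    κ * R ^ (-(α / (q - 1))) * R ^ (-α) * R ^ (n + α) ≤ κ := by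
  have hR0 : 0 < R := zero_lt_one.trans_le hR
  rw [mul_assoc, mul_assoc, ← rpow_add hR0, ← rpow_add hR0]
  refine mul_le_of_le_one_right hκ.le (rpow_le_one_of_one_le_of_nonpos hR ?_)
  linarith [(le_div_iff₀ (sub_pos.2 hq)).2 hcrit]

lemma IsWeakSupersolution.mul_setIntegral_rpow_le
    (hsuper : IsWeakSupersolution (halfSpace n) a w g)
    (hg : ∀ p ∈ halfSpace n, k * w p ^ q ≤ g p) (hq : 0 ≤ q) (hτ : 0 < τ) (hR : 0 < R)
    (hl : l ≠ 0) :
    k * ∫ p in halfSpace n, w p ^ q * scaleCutoff n α τ R l p ≤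
      ∫ p in halfSpace n, scaleCutoff n α τ R l p * g p := by
  have hζ := isTestFunction_scaleCutoff n α hτ hR hl
  rw [← integral_const_mul]
  refine setIntegral_mono_on ((integrable_rpow_mul_scaleCutoff α hsuper.contDiffOn.continuousOn
    hq hτ hR hl).const_mul k).integrableOn (integrable_bilin_of_hasCompactSupport (.mul ℝ ℝ)
    hζ.contDiff.continuous hζ.hasCompactSupport hζ.tsupport_subset
    hsuper.locallyIntegrableOn_source).integrableOn (isOpen_halfSpace n).measurableSet
    fun p hp => ?_
  calc k * (w p ^ q * scaleCutoff n α τ R l p) = scaleCutoff n α τ R l p * (k * w p ^ q) := by ring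
    _ ≤ scaleCutoff n α τ R l p * g p :=
        mul_le_mul_of_nonneg_left (hg p hp) (scaleCutoff_nonneg n α τ R l p)

lemma IsWeakSupersolution.setIntegral_rpow_le_of_young
    (hsuper : IsWeakSupersolution (halfSpace n) a w g)
    (ha : ∀ᵐ p ∂volume.restrict (halfSpace n), (coeffForm a p).IsPosSemidef)
    (hw0 : ∀ p ∈ halfSpace n, 0 ≤ w p) (hk : 0 < k) (hg : ∀ p ∈ halfSpace n, k * w p ^ q ≤ g p)
    {s : ℝ} (hs : s ∈ Ioc 0 (1 / 2)) (hq : 0 ≤ q) (hε : 0 < ε) (hτ : 0 < τ) (hR : 0 < R)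
    (hl : l ≠ 0) (hL : 0 ≤ L)
    (hχt : ∀ p ∈ halfSpace n,
      |pdT (boxCutoff n α R) p| ≤ (shell n α R).indicator (fun _ => L) p)
    (hχx : ∀ᵐ p ∂volume.restrict (halfSpace n),
      coeffForm a p (gradX (boxCutoff n α R) p) (gradX (boxCutoff n α R) p) ≤
        (shell n α R).indicator (fun _ => L) p)
    (hyoung : ∀ z χ : ℝ, 0 ≤ z → χ ∈ Icc 0 1 →
      (1 + z) ^ (1 + s) * χ ^ l ≤ δ * (z ^ q * χ ^ (l + 2)) + M) :
    ∫ p in halfSpace n, w p ^ q * scaleCutoff n α τ R (l + 2) p ≤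
      (3 + 1 / s) * (l + 2) ^ 2 / k * (ε * L) *
        (δ * ε ^ (-q) * (∫ p in shell n α R, w p ^ q * scaleCutoff n α τ R (l + 2) p) +
          M * volume.real (shell n α R)) := by
  have hg0 : ∀ p ∈ halfSpace n, 0 ≤ g p := fun p hp =>
    (mul_nonneg hk.le (rpow_nonneg (hw0 p hp) q)).trans (hg p hp)
  have hs0 := hs.1
  rw [← mul_le_mul_iff_right₀ hk]
  refine (hsuper.mul_setIntegral_rpow_le hg hq hτ hR (by omega)).trans
    ((hsuper.setIntegral_scaleCutoff_mul_le ha hw0 hg0 hs hε hτ hR hl hχt hχx).trans ?_)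
  refine (mul_le_mul_of_nonneg_left (setIntegral_one_add_div_rpow_mul_scaleCutoff_le hyoung hl hq
    hsuper.contDiffOn.continuousOn hw0 hε hτ hR) (by positivity)).trans_eq ?_
  field_simp

lemma IsWeakSupersolution.exists_setIntegral_rpow_le
    (hsuper : IsWeakSupersolution (halfSpace n) a w g)
    (ha : ∀ᵐ p ∂volume.restrict (halfSpace n), (coeffForm a p).IsPosSemidef)
    (hA : ∀ᵐ p ∂volume.restrict (halfSpace n), ∀ ξ : Xn n,
      ∑ i, ∑ j, a i j p * ξ i * ξ j ≤ A p * ‖ξ‖ ^ 2)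
    {c : ℝ} (hc : 0 ≤ c) (hcond : Cond8 A α c) (hw0 : ∀ p ∈ halfSpace n, 0 ≤ w p) (hk : 0 < k)
    (hg : ∀ p ∈ halfSpace n, k * w p ^ q ≤ g p) (hq : 1 < q) (hcrit : n * (q - 1) ≤ α)
    (hτ : 0 < τ) :
    ∃ l : ℕ, l ≠ 0 ∧ ∀ δ, 0 < δ → ∃ M, ∀ R, 1 ≤ R → ∀ κ, 0 < κ →
      ∫ p in halfSpace n, w p ^ q * scaleCutoff n α τ R l p ≤
        δ * κ ^ (1 - q) * (∫ p in shell n α R, w p ^ q * scaleCutoff n α τ R l p) + M * κ := by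
  obtain ⟨s, hs, hsq⟩ : ∃ s ∈ Ioc (0 : ℝ) (1 / 2), 1 + s < q :=
    ⟨min (1 / 2) ((q - 1) / 2), ⟨lt_min (by norm_num) (by linarith), min_le_left _ _⟩,
      by linarith [min_le_right (1 / 2) ((q - 1) / 2)]⟩
  obtain ⟨l, hl, hyoung⟩ := exists_one_add_rpow_mul_pow_le (by linarith [hs.1] : 0 ≤ 1 + s) hsq
  obtain ⟨L, hL, hχ⟩ := exists_boxCutoff_bound hc hA hcond
  obtain ⟨V, hV⟩ := volume_real_shell_le n α
  have hV0 : 0 ≤ V := by simpa using measureReal_nonneg.trans (hV 1 one_pos)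
  have hs0 := hs.1
  set C := (3 + 1 / s) * (l + 2) ^ 2 * L / k with hC
  have hC0 : 0 ≤ C := by positivity
  refine ⟨l + 2, by omega, fun δ hδ => ?_⟩
  obtain ⟨M, hM⟩ := hyoung (δ / (C + 1)) (by positivity)
  have hM0 : 0 ≤ M := by simpa [hl] using hM 0 0 le_rfl ⟨le_rfl, zero_le_one⟩
  refine ⟨C * M * V, fun R hR κ hκ => ?_⟩
  have hR0 : 0 < R := zero_lt_one.trans_le hR
  set ε := κ * R ^ (-(α / (q - 1)))
  have hε : 0 < ε := by positivity
  have henergy := hsuper.setIntegral_rpow_le_of_young ha hw0 hk hg hs (by linarith) hε hτ hR0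
    hl (by positivity) (hχ R hR).1 (hχ R hR).2 hM
  set Y := ∫ p in shell n α R, w p ^ q * scaleCutoff n α τ R (l + 2) p
  have hY : 0 ≤ Y := setIntegral_nonneg (measurableSet_shell n α R) fun p hp =>
    mul_nonneg (rpow_nonneg (hw0 p (shell_subset_halfSpace n α R hp)) q)
      (scaleCutoff_nonneg n α τ R _ p)
  calc ∫ p in halfSpace n, w p ^ q * scaleCutoff n α τ R (l + 2) p
      ≤ C * (ε * R ^ (-α)) * (δ / (C + 1) * ε ^ (-q) * Y + M * volume.real (shell n α R)) :=
        henergy.trans_eq (by rw [hC]; ring)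
    _ ≤ C * (ε * R ^ (-α)) * (δ / (C + 1) * ε ^ (-q) * Y + M * (V * R ^ (n + α))) := by
        gcongr
        exact hV R hR0
    _ = δ * (C / (C + 1)) * (ε * R ^ (-α) * ε ^ (-q)) * Y +
          C * M * V * (ε * R ^ (-α) * R ^ (n + α)) := by ring
    _ ≤ δ * κ ^ (1 - q) * Y + C * M * V * κ := by
        rw [scaling_main_term hq.ne' hκ hR0]
        gcongr
        · exact mul_le_of_le_one_right hδ.le ((div_le_one (by positivity)).2 (by linarith))
        · exact scaling_volume_term_le hq hcrit hκ hR

end Absorption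

section Conclusion

lemma integrable_of_tendsto_of_integral_le {X : Type*} [MeasurableSpace X] {μ : Measure X}
    {F : ℕ → X → ℝ} {f : X → ℝ} {K : ℝ} (hF : ∀ m, Integrable (F m) μ)
    (hF0 : ∀ m, 0 ≤ᵐ[μ] F m) (hK : ∀ m, ∫ x, F m x ∂μ ≤ K)
    (hlim : ∀ᵐ x ∂μ, Tendsto (fun m => F m x) atTop (𝓝 (f x))) : Integrable f μ := by
  have hFmeas : ∀ m, AEStronglyMeasurable (F m) μ := fun m => (hF m).aestronglyMeasurable
  have hnorm : ∀ m, ∫⁻ x, ‖F m x‖ₑ ∂μ ≤ ENNReal.ofReal K := fun m =>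
    calc ∫⁻ x, ‖F m x‖ₑ ∂μ = ENNReal.ofReal (∫ x, F m x ∂μ) := by
          rw [ofReal_integral_eq_lintegral_ofReal (hF m) (hF0 m)]
          exact lintegral_congr_ae ((hF0 m).mono fun x hx => Real.enorm_of_nonneg hx)
      _ ≤ ENNReal.ofReal K := ENNReal.ofReal_le_ofReal (hK m)
  refine ⟨aestronglyMeasurable_of_tendsto_ae atTop hFmeas hlim, ?_⟩
  calc ∫⁻ x, ‖f x‖ₑ ∂μ = ∫⁻ x, liminf (fun m => ‖F m x‖ₑ) atTop ∂μ :=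
        lintegral_congr_ae (hlim.mono fun x hx => hx.enorm.liminf_eq.symm)
    _ ≤ liminf (fun m => ∫⁻ x, ‖F m x‖ₑ ∂μ) atTop := lintegral_liminf_le' fun m => (hFmeas m).enorm
    _ ≤ ENNReal.ofReal K := liminf_le_of_frequently_le' (.of_forall hnorm)
    _ < ⊤ := ENNReal.ofReal_lt_top

lemma ae_eq_zero_of_integral_absorption {X : Type*} [MeasurableSpace X] {μ : Measure X}
    {f : X → ℝ} {χ : ℕ → X → ℝ} {D : ℕ → Set X} {γ : ℝ} (hf0 : 0 ≤ᵐ[μ] f)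
    (hχ : ∀ m x, χ m x ∈ Icc 0 1) (hχ1 : ∀ x, ∀ᶠ m in atTop, χ m x = 1)
    (hD : ∀ m, MeasurableSet (D m)) (hDout : ∀ x, ∀ᶠ m in atTop, x ∉ D m)
    (hint : ∀ m, Integrable (fun x => f x * χ m x) μ)
    (habsorb : ∀ δ, 0 < δ → ∃ M, ∀ m, ∀ κ, 0 < κ → ∫ x, f x * χ m x ∂μ ≤
      δ * κ ^ γ * (∫ x in D m, f x * χ m x ∂μ) + M * κ) :
    f =ᵐ[μ] 0 := by
  have hfχ0 : ∀ m, 0 ≤ᵐ[μ] fun x => f x * χ m x := fun m =>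
    hf0.mono fun x hx => mul_nonneg hx (hχ m x).1
  have hfχ : ∀ x, ∀ᶠ m in atTop, f x * χ m x = f x := fun x =>
    (hχ1 x).mono fun m hm => by rw [hm, mul_one]
  have hfint : Integrable f μ := by
    obtain ⟨M, hM⟩ := habsorb (1 / 2) (by norm_num)
    refine integrable_of_tendsto_of_integral_le (K := 2 * M) hint hfχ0 (fun m => ?_)
      (.of_forall fun x => tendsto_nhds_of_eventually_eq (hfχ x))
    have hunit := hM m 1 one_pos
    rw [one_rpow, mul_one, mul_one] at hunit
    linarith [setIntegral_le_integral (s := D m) (hint m) (hfχ0 m)]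
  have hdom : ∀ m, ∀ᵐ x ∂μ, ‖f x * χ m x‖ ≤ ‖f x‖ := fun m => .of_forall fun x => by
    rw [norm_mul]
    exact mul_le_of_le_one_right (norm_nonneg _) (abs_le.2 ⟨by linarith [(hχ m x).1], (hχ m x).2⟩)
  have hlim : Tendsto (fun m => ∫ x, f x * χ m x ∂μ) atTop (𝓝 (∫ x, f x ∂μ)) :=
    tendsto_integral_of_dominated_convergence (fun x => ‖f x‖)
      (fun m => (hint m).aestronglyMeasurable) hfint.norm hdom
      (.of_forall fun x => tendsto_nhds_of_eventually_eq (hfχ x))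
  have hlimD : Tendsto (fun m => ∫ x in D m, f x * χ m x ∂μ) atTop (𝓝 0) := by
    simp only [← integral_indicator (hD _)]
    rw [← integral_zero X ℝ (μ := μ)]
    exact tendsto_integral_of_dominated_convergence (fun x => ‖f x‖)
      (fun m => ((hint m).indicator (hD m)).aestronglyMeasurable) hfint.norm
      (fun m => (hdom m).mono fun x hx => (norm_indicator_le_norm_self _ x).trans hx)
      (.of_forall fun x => tendsto_nhds_of_eventually_eq
        ((hDout x).mono fun m hm => indicator_of_notMem hm _))
  obtain ⟨M, hM⟩ := habsorb 1 one_pos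
  have hsmall : ∀ κ, 0 < κ → ∫ x, f x ∂μ ≤ M * κ := fun κ hκ => by
    simpa using le_of_tendsto_of_tendsto' hlim
      ((hlimD.const_mul (1 * κ ^ γ)).add_const (M * κ)) fun m => hM m κ hκ
  have hzero : ∫ x, f x ∂μ ≤ 0 := by
    have hM0 : Tendsto (fun κ => M * κ) (𝓝[>] 0) (𝓝 0) := by
      simpa using ((continuous_const_mul M).tendsto 0).mono_left nhdsWithin_le_nhds
    exact ge_of_tendsto hM0 (eventually_mem_nhdsWithin.mono hsmall)
  exact (integral_eq_zero_iff_of_nonneg_ae hf0 hfint).1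
    (hzero.antisymm (integral_nonneg_of_ae hf0))

variable {n : ℕ} {α q k c : ℝ} {w g : Pt n → ℝ} {a : Fin n → Fin n → Pt n → ℝ} {A : Pt n → ℝ}

lemma eventually_mem_timeCylinder_pow (hα : 0 < α) (p : Pt n) :
    ∀ᶠ m : ℕ in atTop, p.1 ≤ ((m : ℝ) + 1) ^ α ∧ ‖p.2‖ ≤ (m : ℝ) + 1 := by
  have hR : Tendsto (fun m : ℕ => (m : ℝ) + 1) atTop atTop :=
    tendsto_natCast_atTop_atTop.atTop_add tendsto_const_nhds
  exact (((tendsto_rpow_atTop hα).comp hR).eventually_ge_atTop p.1).and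
    (hR.eventually_ge_atTop ‖p.2‖)

lemma IsWeakSupersolution.rpow_mul_timeCutoff_ae_eq_zero
    (hsuper : IsWeakSupersolution (halfSpace n) a w g)
    (ha : ∀ᵐ p ∂volume.restrict (halfSpace n), (coeffForm a p).IsPosSemidef)
    (hA : ∀ᵐ p ∂volume.restrict (halfSpace n), ∀ ξ : Xn n,
      ∑ i, ∑ j, a i j p * ξ i * ξ j ≤ A p * ‖ξ‖ ^ 2)
    (hc : 0 ≤ c) (hcond : Cond8 A α c) (hw0 : ∀ p ∈ halfSpace n, 0 ≤ w p) (hk : 0 < k)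
    (hg : ∀ p ∈ halfSpace n, k * w p ^ q ≤ g p) (hα : 0 < α) (hq : 1 < q)
    (hcrit : n * (q - 1) ≤ α) {τ : ℝ} (hτ : 0 < τ) :
    (fun p => w p ^ q * timeCutoff n τ p) =ᵐ[volume.restrict (halfSpace n)] 0 := by
  obtain ⟨l, hl, habsorb⟩ :=
    hsuper.exists_setIntegral_rpow_le ha hA hc hcond hw0 hk hg hq hcrit hτ
  have hR : ∀ m : ℕ, (1 : ℝ) ≤ m + 1 := fun m => by simp
  have hassoc : ∀ R p, w p ^ q * timeCutoff n τ p * boxCutoff n α R p ^ l =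
      w p ^ q * scaleCutoff n α τ R l p := fun R p => mul_assoc _ _ _
  have hshell : ∀ R, (volume.restrict (halfSpace n)).restrict (shell n α R) =
      volume.restrict (shell n α R) := fun R =>
    Measure.restrict_restrict_of_subset (shell_subset_halfSpace n α R)
  refine ae_eq_zero_of_integral_absorption (χ := fun m p => boxCutoff n α (m + 1) p ^ l)
    (D := fun m => shell n α (m + 1)) (γ := 1 - q) ?_ (fun m p => ?_) (fun p => ?_)
    (fun m => measurableSet_shell n α _) (fun p => ?_) (fun m => ?_) (fun δ hδ => ?_)
  · exact (ae_restrict_iff' (isOpen_halfSpace n).measurableSet).2 <| .of_forall fun p hp =>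
      mul_nonneg (rpow_nonneg (hw0 p hp) q) (timeCutoff_mem_Icc n τ p).1
  · obtain ⟨hχ0, hχ1⟩ := boxCutoff_mem_Icc n α (m + 1) p
    exact ⟨pow_nonneg hχ0 l, pow_le_one₀ hχ0 hχ1⟩
  · filter_upwards [eventually_mem_timeCylinder_pow hα p] with m hm
    rw [boxCutoff_eq_one (by positivity) hm.1 hm.2, one_pow]
  · filter_upwards [eventually_mem_timeCylinder_pow hα p] with m hm hp
    exact hp.2 ⟨⟨hp.1.1.1, hm.1⟩, mem_closedBall_zero_iff.2 hm.2⟩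
  · simp only [hassoc]
    exact (integrable_rpow_mul_scaleCutoff α hsuper.contDiffOn.continuousOn (by linarith) hτ
      (by positivity) hl).integrableOn
  · obtain ⟨M, hM⟩ := habsorb δ hδ
    refine ⟨M, fun m κ hκ => ?_⟩
    simpa only [hassoc, hshell] using hM (m + 1) (hR m) κ hκ

theorem IsWeakSupersolution.eq_zero
    (hsuper : IsWeakSupersolution (halfSpace n) a w g)
    (ha : ∀ᵐ p ∂volume.restrict (halfSpace n), (coeffForm a p).IsPosSemidef)
    (hA : ∀ᵐ p ∂volume.restrict (halfSpace n), ∀ ξ : Xn n,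
      ∑ i, ∑ j, a i j p * ξ i * ξ j ≤ A p * ‖ξ‖ ^ 2)
    (hc : 0 ≤ c) (hcond : Cond8 A α c) (hw0 : ∀ p ∈ halfSpace n, 0 ≤ w p) (hk : 0 < k)
    (hg : ∀ p ∈ halfSpace n, k * w p ^ q ≤ g p) (hα : 0 < α) (hq : 1 < q)
    (hcrit : n * (q - 1) ≤ α) : ∀ p ∈ halfSpace n, w p = 0 := by
  intro p hp
  have hτ : 0 < p.1 / 2 := half_pos hp
  have hzero := Measure.eqOn_open_of_ae_eq
    (hsuper.rpow_mul_timeCutoff_ae_eq_zero ha hA hc hcond hw0 hk hg hα hq hcrit hτ)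
    (isOpen_halfSpace n)
    ((hsuper.contDiffOn.continuousOn.rpow_const fun _ _ => .inr (by linarith)).mul
      (contDiff_timeCutoff n _).continuous.continuousOn) continuousOn_const hp
  have hT := timeCutoff_pos hτ (half_lt_self hp)
  exact (rpow_eq_zero (hw0 p hp) (by linarith)).1 ((mul_eq_zero_iff_right hT.ne').1 hzero)

end Conclusion

/-- the Liouville comparison principle (Theorem 1). -/
theorem liouville_comparison_principle
    (n : ℕ) (hn : 1 ≤ n) (α c q : ℝ) (hα : 0 < α) (hc : 0 < c)
    (hq1 : 1 < q) (hq2 : q ≤ 1 + α / n)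
    (a : Fin n → Fin n → Pt n → ℝ) (A : Pt n → ℝ)
    (ha_meas : ∀ i j, Measurable (a i j))
    (ha_locbdd : ∀ i j, ∀ K : Set (Pt n), IsCompact K → K ⊆ halfSpace n →
      ∃ M, ∀ p ∈ K, |a i j p| ≤ M)
    (ha_symm : ∀ i j, ∀ᵐ p ∂(volume.restrict (halfSpace n)), a i j p = a j i p)
    (hA_meas : Measurable A)
    (hA_nonneg : ∀ p, 0 ≤ A p)
    (hA_locbdd : ∀ K : Set (Pt n), IsCompact K → K ⊆ halfSpace n →
      ∃ M, ∀ p ∈ K, A p ≤ M)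
    (hform : ∀ᵐ p ∂(volume.restrict (halfSpace n)), ∀ ξ : Xn n,
      0 ≤ ∑ i, ∑ j, a i j p * ξ i * ξ j ∧
      ∑ i, ∑ j, a i j p * ξ i * ξ j ≤ A p * ‖ξ‖ ^ 2)
    (hcond8 : Cond8 A α c)
    (u v : Pt n → ℝ)
    (hu : ContDiffOn ℝ 1 u (halfSpace n)) (hv : ContDiffOn ℝ 1 v (halfSpace n))
    (hu_int : LocallyIntegrableOn (fun p => |u p| ^ q) (halfSpace n) volume)
    (hv_int : LocallyIntegrableOn (fun p => |v p| ^ q) (halfSpace n) volume)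
    (hsol : WeakSolPair a q u v)
    (huv : ∀ p ∈ halfSpace n, v p ≤ u p) :
    ∀ p ∈ halfSpace n, u p = v p := by
  have hpsd : ∀ᵐ p ∂volume.restrict (halfSpace n), (coeffForm a p).IsPosSemidef := by
    filter_upwards [hform, ae_all_iff.2 fun i => ae_all_iff.2 (ha_symm i)] with p hp hsymm
    exact isPosSemidef_coeffForm hsymm fun ξ => (hp ξ).1
  have hmajorant := hform.mono fun p hp ξ => (hp ξ).2
  have hcrit : n * (q - 1) ≤ α := by
    rw [mul_comm, ← le_div_iff₀ (Nat.cast_pos.2 hn)]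
    linarith
  have hsuper := hsol.isWeakSupersolution_sub hq1.le ha_meas ha_locbdd hu hv
  have hzero : ∀ p ∈ halfSpace n, (u - v) p = 0 :=
    hsuper.eq_zero hpsd hmajorant hc.le hcond8 (fun p hp => sub_nonneg.2 (huv p hp))
      (rpow_pos_of_pos two_pos (1 - q))
      (fun p hp => mul_sub_rpow_le_oddPow_sub_oddPow hq1.le (huv p hp)) hα hq1 hcrit
  exact fun p hp => sub_eq_zero.1 (hzero p hp)
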